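/- Let α ∈ (0,1), p > 1 real, c > 0, and let φ be an even, nontrivial steady solution with speed c (for either nonlinearity, case abs or case sgn) that is monotonically increasing on (−π, 0), satisfies n′(φ(x)) ≤ c for every x ∈ ℝ, and attains its maximum φ(0) = μ = (c/p)^(1/(p−1)). Then: (i) φ is strictly increasing on (−π, 0); (ii) φ is globally α-Hölder continuous, i.e. there is C > 0 such that |φ(x) − φ(y)| ≤ C·|x − y|^α for all x, y ∈ ℝ; (iii) φ is exactly α-Hölder continuous at 0: there exist δ, c₁, c₂ > 0 such that c₁·|x|^α ≤ μ − φ(x) ≤ c₂·|x|^α for every x with |x| ≤ δ. -/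

import Mathlib

open Real MeasureTheory Set Filter Topology

/-- The periodic convolution kernel `K_α`: equal to the explicit integral
representation for `x ∉ 2πℤ` and to `0` on `2πℤ`. -/
noncomputable def Kker (α x : ℝ) : ℝ :=
  letI : Decidable (∃ k : ℤ, x = 2 * π * k) := Classical.propDecidable _
  if ∃ k : ℤ, x = 2 * π * k then 0
  else (1 / (π * Real.Gamma α)) *
    ∫ t in Set.Ioi (0:ℝ),
      t ^ (α - 1) * (Real.exp t * Real.cos x - 1) /
        (1 - 2 * Real.exp t * Real.cos x + Real.exp (2 * t))

/-- A steady travelling-wave solution of speed `c` with nonlinearity `n`: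
a continuous, `2π`-periodic, zero-mean function `φ` satisfying the steady
convolution equation. -/
def IsSteadySolution (α c : ℝ) (n φ : ℝ → ℝ) : Prop :=
  Continuous φ ∧ Function.Periodic φ (2 * π) ∧
  (∫ y in (-π)..π, φ y) = 0 ∧
  ∀ x : ℝ, (∫ y in (-π)..π, Kker α (x - y) * φ y) =
    c * φ x - n (φ x) + (1 / (2 * π)) * ∫ y in (-π)..π, n (φ y)

/-- Case abs nonlinearity `n(x) = |x|^p`. -/
noncomputable def nAbs (p x : ℝ) : ℝ := |x| ^ p
/-- Case sgn nonlinearity `n(x) = x·|x|^(p-1)`. -/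
noncomputable def nSgn (p x : ℝ) : ℝ := x * |x| ^ (p - 1)
/-- Derivative of the case abs nonlinearity, `n′(x) = p·x·|x|^(p-2)`. -/
noncomputable def nAbs' (p x : ℝ) : ℝ := p * x * |x| ^ (p - 2)
/-- Derivative of the case sgn nonlinearity, `n′(x) = p·|x|^(p-1)`. -/
noncomputable def nSgn' (p x : ℝ) : ℝ := p * |x| ^ (p - 1)


/-- The Poisson-type integrand defining the kernel, in a convenient form. -/
noncomputable def Fk (t x : ℝ) : ℝ := (cos x - exp (-t)) / (2 * (cosh t - cos x))

lemma one_sub_cos_lower {x : ℝ} (h0 : 0 ≤ x) (h1 : x ≤ 3 * π / 2) : x ^ 2 / 50 ≤ 1 - cos x := by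
  have hs : x / (3 * π) ≤ sin (x / 2) := by
    rcases le_total x π with h | h
    · have := Real.mul_le_sin (x := x / 2) (by linarith) (by linarith)
      refine le_trans ?_ this
      have : 2 / π * (x / 2) = 3 * (x / (3 * π)) := by field_simp
      rw [this]
      have : 0 ≤ x / (3 * π) := by positivity
      linarith
    · have := Real.mul_le_sin (x := π - x / 2) (by linarith) (by linarith)
      rw [Real.sin_pi_sub] at this
      refine le_trans ?_ this
      rw [div_mul_eq_mul_div, div_le_div_iff₀ (by positivity) (by positivity)]
      nlinarith [Real.pi_pos]
  have hc : 1 - cos x = 2 * sin (x / 2) ^ 2 := by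
    have h1 := Real.cos_sq (x / 2)
    have h2 := Real.sin_sq_add_cos_sq (x / 2)
    have h3 : 2 * (x / 2) = x := by ring
    rw [h3] at h1
    linarith
  rw [hc]
  have h2 : (x / (3 * π)) ^ 2 ≤ sin (x / 2) ^ 2 := by
    apply pow_le_pow_left₀ (by positivity) hs
  have h3 : x ^ 2 / 100 ≤ (x / (3 * π)) ^ 2 := by
    rw [div_pow]
    apply div_le_div_of_nonneg_left (by positivity) (by positivity)
    nlinarith [Real.pi_pos, Real.pi_lt_d2]
  linarith

lemma cosh_sub_one_sq {t : ℝ} (h0 : 0 ≤ t) : t ^ 2 / 2 ≤ cosh t - 1 := by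
  have h1 : cosh t - 1 = 2 * sinh (t / 2) ^ 2 := by
    have h1 := Real.cosh_two_mul (t / 2)
    have h2 := Real.cosh_sq (t / 2)
    have h3 : 2 * (t / 2) = t := by ring
    rw [h3] at h1
    linarith
  have h2 : t / 2 ≤ sinh (t / 2) := Real.self_le_sinh_iff.mpr (by linarith)
  rw [h1]
  nlinarith [pow_le_pow_left₀ (by linarith) h2 2]

lemma cosh_sub_one_cube {t : ℝ} (h0 : 0 ≤ t) : t ^ 3 / 12 ≤ cosh t - 1 := by
  have h1 := Real.sum_le_exp_of_nonneg h0 4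
  simp [Finset.sum_range_succ, Nat.factorial] at h1
  have h2 := Real.add_one_le_exp (-t)
  rw [Real.cosh_eq]
  nlinarith [sq_nonneg t]

/-- Lower bounds for the denominator. -/
lemma den_sq {t x m : ℝ} (ht : 0 < t) (h0 : 0 < x) (h1 : x ≤ 3 * π / 2) (hm : m = max t x) :
    m ^ 2 / 50 ≤ cosh t - cos x := by
  have hc := Real.cos_le_one x
  have hh := Real.one_le_cosh t
  have a := one_sub_cos_lower h0.le h1
  have b := cosh_sub_one_sq ht.le
  rcases max_choice t x with h | h <;> rw [h] at hm <;> subst hm <;> nlinarith [sq_nonneg m]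

lemma den_cube {t x m : ℝ} (ht : 0 < t) (h0 : 0 < x) (h1 : x ≤ 3 * π / 2) (hm : m = max t x) :
    m ^ 3 / 250 ≤ cosh t - cos x := by
  have hc := Real.cos_le_one x
  have hh := Real.one_le_cosh t
  have a := one_sub_cos_lower h0.le h1
  have b := cosh_sub_one_cube ht.le
  rcases max_choice t x with h | h <;> rw [h] at hm <;> subst hm
  · have : 0 < m ^ 3 := by positivity
    linarith
  · have h5 : m ≤ 5 := by nlinarith [Real.pi_lt_d2]
    have : m ^ 3 ≤ 5 * m ^ 2 := by nlinarith [sq_nonneg m]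
    linarith

lemma den_pos {t : ℝ} (ht : 0 < t) (x : ℝ) : 0 < cosh t - cos x := by
  have := Real.one_lt_cosh.mpr ht.ne'
  linarith [Real.cos_le_one x]

lemma Fk_bound_t {t : ℝ} (ht : 0 < t) (x : ℝ) : |Fk t x| ≤ 2 / t := by
  have hD := den_pos ht x
  have hb := cosh_sub_one_sq ht.le
  have hc := Real.cos_le_one x
  have hc' := Real.neg_one_le_cos x
  have he : exp (-t) < 1 := by rw [Real.exp_lt_one_iff]; linarith
  have he0 := Real.exp_pos (-t)
  have he1 := Real.add_one_le_exp (-t)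
  have hh := Real.one_le_cosh t
  unfold Fk
  rw [abs_div, abs_of_pos (show 0 < 2 * (cosh t - cos x) by linarith),
    div_le_div_iff₀ (by linarith) ht]
  have h1 : |cos x - exp (-t)| ≤ 2 := by rw [abs_le]; constructor <;> linarith
  have h2 : |cos x - exp (-t)| ≤ (cosh t - cos x) + t := by
    rw [abs_le]; constructor <;> linarith
  have h3 : 0 ≤ |cos x - exp (-t)| := abs_nonneg _
  rcases le_total t 1 with h | h
  · nlinarith
  · nlinarith

lemma Fk_bound_x {t x : ℝ} (ht : 0 < t) (htx : t ≤ x) (h1 : x ≤ 3 * π / 2) : |Fk t x| ≤ 30 / x := by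
  have hx : 0 < x := by linarith
  have hD := den_pos ht x
  have hb := one_sub_cos_lower hx.le h1
  have hc := Real.cos_le_one x
  have he : exp (-t) < 1 := by rw [Real.exp_lt_one_iff]; linarith
  have he1 := Real.add_one_le_exp (-t)
  have hh := Real.one_le_cosh t
  have h5 : x ≤ 5 := by nlinarith [Real.pi_lt_d2]
  unfold Fk
  rw [abs_div, abs_of_pos (show 0 < 2 * (cosh t - cos x) by linarith),
    div_le_div_iff₀ (by linarith) hx]
  have h2 : |cos x - exp (-t)| ≤ (cosh t - cos x) + t := by
    rw [abs_le]; constructor <;> linarith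
  nlinarith

lemma Fk_eq {t : ℝ} (ht : 0 < t) (x : ℝ) :
    (exp t * cos x - 1) / (1 - 2 * exp t * cos x + exp (2 * t)) = Fk t x := by
  have hD := den_pos ht x
  have he : exp (-t) * exp t = 1 := by rw [← Real.exp_add]; simp
  have h2 : exp (2 * t) = exp t * exp t := by rw [← Real.exp_add]; ring_nf
  have h3 : exp t * cos x - 1 = exp t * (cos x - exp (-t)) := by linear_combination he
  have h4 : 1 - 2 * exp t * cos x + exp (2 * t) = exp t * (2 * (cosh t - cos x)) := by
    rw [Real.cosh_eq, h2]; linear_combination -he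
  rw [h3, h4, Fk, mul_div_mul_left _ _ (Real.exp_pos t).ne']

lemma Fk_sub {t : ℝ} (ht : 0 < t) (x y : ℝ) :
    Fk t x - Fk t y = sinh t * (cos x - cos y) / (2 * (cosh t - cos x) * (cosh t - cos y)) := by
  have hD := den_pos ht x
  have hE := den_pos ht y
  have : exp (-t) = cosh t - sinh t := (Real.cosh_sub_sinh t).symm
  unfold Fk
  rw [this]
  field_simp
  ring

lemma Fk_lt {t : ℝ} (ht : 0 < t) {x y : ℝ} (h : cos x < cos y) : Fk t x < Fk t y := by
  rw [← sub_pos, Fk_sub ht]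
  have hD := den_pos ht x
  have hE := den_pos ht y
  have := Real.sinh_pos_iff.mpr ht
  have : 0 < cos y - cos x := by linarith
  positivity

lemma Fk_hasDeriv {t : ℝ} (ht : 0 < t) (x : ℝ) :
    HasDerivAt (Fk t) (-(sinh t * sin x) / (2 * (cosh t - cos x) ^ 2)) x := by
  have hD := den_pos ht x
  have : exp (-t) = cosh t - sinh t := (Real.cosh_sub_sinh t).symm
  have h1 := ((Real.hasDerivAt_cos x).sub_const (exp (-t))).div
    (((Real.hasDerivAt_cos x).const_sub (cosh t)).const_mul 2) (by positivity)
  refine h1.congr_deriv ?_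
  rw [this]
  field_simp
  ring

lemma Fk_hasDeriv2 {t : ℝ} (ht : 0 < t) (x : ℝ) :
    HasDerivAt (fun x => -(sinh t * sin x) / (2 * (cosh t - cos x) ^ 2))
      (sinh t / (2 * (cosh t - cos x) ^ 2) *
        (-cos x + 2 * sin x ^ 2 / (cosh t - cos x))) x := by
  have hD := den_pos ht x
  have h1 := (((Real.hasDerivAt_sin x).const_mul (sinh t)).neg).div
    ((((Real.hasDerivAt_cos x).const_sub (cosh t)).pow 2).const_mul 2)
    (mul_pos two_pos (pow_pos hD 2)).ne'
  refine h1.congr_deriv ?_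
  simp only [Pi.neg_apply, Pi.pow_apply]
  field_simp
  ring

lemma Fk_deriv2_bound {t x m : ℝ} (ht : 0 < t) (h0 : 0 < x) (h1 : x ≤ 3 * π / 2)
    (hm : m = max t x) :
    |sinh t / (2 * (cosh t - cos x) ^ 2) * (-cos x + 2 * sin x ^ 2 / (cosh t - cos x))|
      ≤ 2000 / m ^ 3 := by
  have hD := den_pos ht x
  have hsq := den_sq ht h0 h1 hm
  have hcu := den_cube ht h0 h1 hm
  have hm0 : 0 < m := by rw [hm]; exact lt_max_of_lt_left ht
  have hc := Real.cos_le_one x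
  have hc' := Real.neg_one_le_cos x
  have hh := Real.one_le_cosh t
  have hs := Real.sinh_pos_iff.mpr ht
  have hcs := Real.cosh_sq t
  have hsc := Real.sin_sq_add_cos_sq x
  set D := cosh t - cos x with hDdef
  have hA : |-cos x + 2 * sin x ^ 2 / D| ≤ 5 := by
    have e1 : sin x ^ 2 / D ≤ 2 := by
      rw [div_le_iff₀ hD]; nlinarith
    have e2 : 0 ≤ sin x ^ 2 / D := by positivity
    have e3 : 2 * sin x ^ 2 / D = 2 * (sin x ^ 2 / D) := by ring
    rw [e3, abs_le]
    constructor <;> linarith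
  have hS : sinh t ≤ D * (1 + 10 / m) := by
    apply le_of_sq_le_sq _ (by positivity)
    have e1 : sinh t ^ 2 ≤ D * (D + 2) := by nlinarith
    have e2 : 2 ≤ D * (10 / m) ^ 2 := by
      rw [div_pow, mul_div_assoc', le_div_iff₀ (by positivity)]; linarith
    have e3 : 0 < 10 / m := by positivity
    have e4 := mul_le_mul_of_nonneg_left e2 hD.le
    have e5 : 0 < D ^ 2 * (10 / m) := by positivity
    nlinarith
  rw [abs_mul, abs_of_pos (show 0 < sinh t / (2 * D ^ 2) by positivity)]
  have hB : sinh t / (2 * D ^ 2) ≤ 375 / m ^ 3 := by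
    have e1 : sinh t / (2 * D ^ 2) ≤ D * (1 + 10 / m) / (2 * D ^ 2) := by gcongr
    have e2 : D * (1 + 10 / m) / (2 * D ^ 2) = 1 / (2 * D) + 5 / m * (1 / D) := by
      field_simp; ring
    have e3 : 1 / D ≤ 250 / m ^ 3 := by
      rw [div_le_div_iff₀ hD (by positivity)]; linarith
    have e4 : 1 / D ≤ 50 / m ^ 2 := by
      rw [div_le_div_iff₀ hD (by positivity)]; linarith
    have e5 : 5 / m * (1 / D) ≤ 5 / m * (50 / m ^ 2) := by gcongr
    have e6 : 5 / m * (50 / m ^ 2) = 250 / m ^ 3 := by field_simp; norm_num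
    have e7 : 1 / (2 * D) = 1 / 2 * (1 / D) := by field_simp
    have e8 : 375 / m ^ 3 = 125 / m ^ 3 + 250 / m ^ 3 := by ring
    have e9 : 125 / m ^ 3 = 1 / 2 * (250 / m ^ 3) := by ring
    linarith
  calc _ ≤ 375 / m ^ 3 * 5 := by gcongr
    _ ≤ 2000 / m ^ 3 := by
      rw [div_mul_eq_mul_div]; gcongr; norm_num

/-- Mixed second difference bound for the integrand. -/
lemma Fk_second {t a b y : ℝ} (ht : 0 < t) (ha : 0 ≤ a) (hab : a ≤ b) (hb : 2 * b ≤ y)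
    (hy0 : 0 < y) (hy : y ≤ π) :
    |(Fk t (y + b) + Fk t (y - b)) - (Fk t (y + a) + Fk t (y - a))|
      ≤ 32000 * ((b - a) * b) / (max t y) ^ 3 := by
  set M : ℝ := 16000 / (max t y) ^ 3 with hM
  have hmpos : 0 < max t y := lt_max_of_lt_left ht
  have hM0 : 0 ≤ M := by positivity
  have hF2 : ∀ x ∈ Icc (y - b) (y + b),
      ‖sinh t / (2 * (cosh t - cos x) ^ 2) * (-cos x + 2 * sin x ^ 2 / (cosh t - cos x))‖ ≤ M := by
    intro x hx
    have hx0 : 0 < x := by linarith [hx.1]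
    have := Fk_deriv2_bound ht hx0 (by linarith [hx.2]) rfl
    rw [Real.norm_eq_abs]
    refine this.trans ?_
    have h2 : max t y ≤ 2 * max t x := by
      apply max_le
      · linarith [le_max_left t x]
      · linarith [le_max_right t x, hx.1]
    have h3 : (max t y) ^ 3 ≤ (2 * max t x) ^ 3 := pow_le_pow_left₀ hmpos.le h2 3
    have : 0 < max t x := lt_max_of_lt_left ht
    rw [hM, div_le_div_iff₀ (by positivity) (by positivity)]
    nlinarith
  set F' : ℝ → ℝ := fun x => -(sinh t * sin x) / (2 * (cosh t - cos x) ^ 2) with hF'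
  have hg' : ∀ x ∈ Icc a b, HasDerivWithinAt (fun x => Fk t (y + x) + Fk t (y - x))
      (F' (y + x) - F' (y - x)) (Icc a b) x := by
    intro x _
    have e1 : HasDerivAt (fun x => Fk t (y + x)) (F' (y + x)) x :=
      (Fk_hasDeriv ht (y + x)).comp_const_add y x
    have e2 : HasDerivAt (fun x => Fk t (y - x)) (-F' (y - x)) x :=
      (Fk_hasDeriv ht (y - x)).comp_const_sub y x
    exact ((e1.add e2).congr_deriv (by ring)).hasDerivWithinAt
  have hbd : ∀ x ∈ Icc a b, ‖F' (y + x) - F' (y - x)‖ ≤ 2 * b * M := by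
    intro x hx
    have := (convex_Icc (y - b) (y + b)).norm_image_sub_le_of_norm_hasDerivWithin_le
      (fun z _ => (Fk_hasDeriv2 ht z).hasDerivWithinAt) hF2
      (x := y - x) (y := y + x) ⟨by linarith [hx.2], by linarith [hx.1]⟩
      ⟨by linarith [hx.1, hx.2], by linarith [hx.2]⟩
    refine this.trans ?_
    have e : ‖y + x - (y - x)‖ = 2 * x := by
      rw [Real.norm_eq_abs, abs_of_nonneg] <;> linarith [hx.1]
    rw [e]
    nlinarith [hx.2]
  have := (convex_Icc a b).norm_image_sub_le_of_norm_hasDerivWithin_le hg' hbd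
    (x := a) (y := b) ⟨le_rfl, hab⟩ ⟨hab, le_rfl⟩
  rw [Real.norm_eq_abs, Real.norm_eq_abs, abs_of_nonneg (sub_nonneg.mpr hab)] at this
  refine this.trans (le_of_eq ?_)
  rw [hM]; ring

lemma Fk_lower {t s : ℝ} (hs : 0 < s) (hs1 : s ≤ 1) (h1 : s ≤ t) (h2 : t ≤ 2 * s) :
    1 / (40000 * s) ≤ Fk t s - Fk t (2 * s) := by
  have ht : 0 < t := by linarith
  rw [Fk_sub ht]
  have hD := den_pos ht s
  have hE := den_pos ht (2 * s)
  have hsh : t ≤ sinh t := Real.self_le_sinh_iff.mpr ht.le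
  have hc2 : cos (2 * s) = 2 * cos s ^ 2 - 1 := Real.cos_two_mul s
  have hlow : s ^ 2 / 50 ≤ 1 - cos s := one_sub_cos_lower hs.le (by linarith [Real.pi_gt_three])
  have hcs : 0 ≤ cos s := Real.cos_nonneg_of_neg_pi_div_two_le_of_le
    (by linarith [Real.pi_gt_three]) (by linarith [Real.pi_gt_three])
  have hch : cosh t ≤ 1 + 16 * s ^ 2 := by
    have e1 := Real.cosh_le_exp_half_sq t
    have e2 : t ^ 2 / 2 ≤ 2 * s ^ 2 := by nlinarith
    have e3 := Real.add_one_le_exp (-(2 * s ^ 2))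
    have e4 : exp (-(2 * s ^ 2)) * exp (2 * s ^ 2) = 1 := by rw [← Real.exp_add]; simp
    have e5 : exp (2 * s ^ 2) ≤ 8 := by
      have : exp (2 * s ^ 2) ≤ exp (1 + 1) := Real.exp_le_exp.mpr (by nlinarith)
      rw [Real.exp_add] at this
      have h1 := Real.exp_one_lt_d9
      have h0 := Real.exp_pos 1
      nlinarith
    have e6 : exp (t ^ 2 / 2) ≤ exp (2 * s ^ 2) := Real.exp_le_exp.mpr e2
    have e7 := Real.exp_pos (2 * s ^ 2)
    nlinarith [sq_nonneg s]
  have hu1 := Real.one_sub_sq_div_two_le_cos (x := s)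
  have hu2 := Real.one_sub_sq_div_two_le_cos (x := 2 * s)
  have hs2 : 0 < s ^ 2 := by positivity
  have hD1 : cosh t - cos s ≤ 18 * s ^ 2 := by linarith
  have hE1 : cosh t - cos (2 * s) ≤ 18 * s ^ 2 := by nlinarith
  have hnum : s * (s ^ 2 / 50) ≤ sinh t * (cos s - cos (2 * s)) := by
    have : s ^ 2 / 50 ≤ cos s - cos (2 * s) := by
      rw [hc2]; nlinarith [Real.cos_le_one s]
    apply mul_le_mul (by linarith) this (by positivity) (by linarith)
  have hden : 2 * (cosh t - cos s) * (cosh t - cos (2 * s)) ≤ 2 * (18 * s ^ 2) * (18 * s ^ 2) := by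
    gcongr
  calc 1 / (40000 * s) ≤ s * (s ^ 2 / 50) / (2 * (18 * s ^ 2) * (18 * s ^ 2)) := by
        rw [div_le_div_iff₀ (by positivity) (by positivity)]
        nlinarith [show 0 < s ^ 4 by positivity]
    _ ≤ _ := by
        apply div_le_div₀ _ hnum (by positivity) hden
        exact le_trans (by positivity) hnum

lemma wint_dom {α k C x : ℝ} (hα : 0 < α) (hk : α < k) (hx : 0 < x) :
    IntegrableOn (fun t => C * (t ^ (α - 1) * (max t x) ^ (-k))) (Ioi 0) ∧
    ∫ t in Ioi (0:ℝ), C * (t ^ (α - 1) * (max t x) ^ (-k))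
      = C * ((1 / α + 1 / (k - α)) * x ^ (α - k)) := by
  have hsplit : Ioi (0:ℝ) = Ioc 0 x ∪ Ioi x := (Ioc_union_Ioi_eq_Ioi hx.le).symm
  have hE1 : EqOn (fun t : ℝ => t ^ (α - 1) * (max t x) ^ (-k)) (fun t => t ^ (α - 1) * x ^ (-k))
      (Ioc 0 x) := fun t ht => by simp only; rw [max_eq_right ht.2]
  have hE2 : EqOn (fun t : ℝ => t ^ (α - 1) * (max t x) ^ (-k)) (fun t => t ^ (α - 1 - k))
      (Ioi x) := fun t ht => by
        have ht0 : 0 < t := hx.trans ht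
        simp only; rw [max_eq_left (le_of_lt ht), ← Real.rpow_add ht0]; ring_nf
  have hI1 : IntegrableOn (fun t : ℝ => t ^ (α - 1) * (max t x) ^ (-k)) (Ioc 0 x) := by
    refine IntegrableOn.congr_fun ?_ hE1.symm measurableSet_Ioc
    have := (intervalIntegral.intervalIntegrable_rpow' (a := 0) (b := x) (r := α - 1)
      (by linarith))
    rw [intervalIntegrable_iff_integrableOn_Ioc_of_le hx.le] at this
    exact this.mul_const _
  have hI2 : IntegrableOn (fun t : ℝ => t ^ (α - 1) * (max t x) ^ (-k)) (Ioi x) := by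
    refine IntegrableOn.congr_fun ?_ hE2.symm measurableSet_Ioi
    exact integrableOn_Ioi_rpow_of_lt (by linarith) hx
  have hI : IntegrableOn (fun t : ℝ => t ^ (α - 1) * (max t x) ^ (-k)) (Ioi 0) := by
    rw [hsplit]; exact hI1.union hI2
  refine ⟨hI.const_mul C, ?_⟩
  rw [integral_const_mul]
  congr 1
  rw [hsplit, setIntegral_union (by simp) measurableSet_Ioi hI1 hI2,
    setIntegral_congr_fun measurableSet_Ioc hE1, setIntegral_congr_fun measurableSet_Ioi hE2,
    integral_Ioi_rpow_of_lt (by linarith) hx, integral_mul_const,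
    ← intervalIntegral.integral_of_le hx.le, integral_rpow (Or.inl (by linarith))]
  have e1 : α - 1 + 1 = α := by ring
  have e2 : α - 1 - k + 1 = α - k := by ring
  rw [e1, e2, Real.zero_rpow hα.ne']
  have e3 : x ^ (α - k) = x ^ α * x ^ (-k) := by rw [← Real.rpow_add hx]; ring_nf
  have h4 : k - α ≠ 0 := by linarith
  have h5 : α - k ≠ 0 := by linarith
  have h6 : -x ^ (α - k) / (α - k) = 1 / (k - α) * x ^ (α - k) := by
    field_simp; ring
  rw [h6, e3]
  ring

lemma wint {α k C x : ℝ} (hα : 0 < α) (hk : α < k) (hx : 0 < x) {g : ℝ → ℝ}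
    (hg : ContinuousOn g (Ioi 0)) (hb : ∀ t, 0 < t → |g t| ≤ C * (max t x) ^ (-k)) :
    IntegrableOn (fun t => t ^ (α - 1) * g t) (Ioi 0) ∧
    |∫ t in Ioi (0:ℝ), t ^ (α - 1) * g t| ≤ C * ((1 / α + 1 / (k - α)) * x ^ (α - k)) := by
  obtain ⟨h1, h2⟩ := wint_dom (C := C) hα hk hx
  have hle : ∀ᵐ t ∂(volume.restrict (Ioi (0:ℝ))),
      ‖t ^ (α - 1) * g t‖ ≤ C * (t ^ (α - 1) * (max t x) ^ (-k)) := by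
    refine (ae_restrict_iff' measurableSet_Ioi).mpr (Eventually.of_forall fun t ht => ?_)
    have ht0 : 0 < t := ht
    have hp : 0 < t ^ (α - 1) := Real.rpow_pos_of_pos ht0 _
    rw [norm_mul, Real.norm_eq_abs, Real.norm_eq_abs, abs_of_pos hp]
    calc _ ≤ t ^ (α - 1) * (C * (max t x) ^ (-k)) := by gcongr; exact hb t ht0
      _ = _ := by ring
  have hcont : ContinuousOn (fun t : ℝ => t ^ (α - 1) * g t) (Ioi 0) := by
    refine ContinuousOn.mul (fun t ht => ?_) hg
    exact (Real.continuousAt_rpow_const t _ (Or.inl (ne_of_gt ht))).continuousWithinAt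
  refine ⟨h1.mono' (hcont.aestronglyMeasurable measurableSet_Ioi) hle, ?_⟩
  rw [← h2, ← Real.norm_eq_abs]
  exact norm_integral_le_of_norm_le h1 hle

lemma Fk_cont (x : ℝ) : ContinuousOn (fun t => Fk t x) (Ioi 0) := by
  unfold Fk
  refine ContinuousOn.div (by fun_prop) (by fun_prop) ?_
  intro t ht
  have := den_pos ht x
  positivity

lemma Fk_int {α : ℝ} (hα : α ∈ Ioo (0:ℝ) 1) {x : ℝ} (hx : cos x < 1) :
    IntegrableOn (fun t => t ^ (α - 1) * Fk t x) (Ioi 0) := by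
  have h1 : 0 < 1 - cos x := by linarith
  refine (wint (k := 1) (C := 2 + 1 / (1 - cos x)) (x := 1) hα.1 hα.2 one_pos (Fk_cont x) ?_).1
  intro t ht
  rw [Real.rpow_neg_one]
  rcases le_total t 1 with h | h
  · rw [max_eq_right h]
    unfold Fk
    have hD := den_pos ht x
    have hc := Real.cos_le_one x
    have hc' := Real.neg_one_le_cos x
    have he : exp (-t) < 1 := by rw [Real.exp_lt_one_iff]; linarith
    have he0 := Real.exp_pos (-t)
    have hh := Real.one_le_cosh t
    rw [abs_div, abs_of_pos (show 0 < 2 * (cosh t - cos x) by linarith)]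
    calc |cos x - exp (-t)| / (2 * (cosh t - cos x)) ≤ 2 / (2 * (1 - cos x)) := by
          apply div_le_div₀ (by norm_num) _ (by positivity) (by linarith)
          rw [abs_le]; constructor <;> linarith
      _ = 1 / (1 - cos x) := by field_simp
      _ ≤ _ := by norm_num
  · rw [max_eq_left h]
    refine (Fk_bound_t ht x).trans ?_
    rw [div_eq_mul_inv]
    gcongr
    have : 0 ≤ 1 / (1 - cos x) := by positivity
    linarith

lemma cos_eq_one_iff' (x : ℝ) : (∃ k : ℤ, x = 2 * π * k) ↔ cos x = 1 := by
  rw [Real.cos_eq_one_iff]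
  constructor
  · rintro ⟨k, hk⟩; exact ⟨k, by rw [hk]; ring⟩
  · rintro ⟨k, hk⟩; exact ⟨k, by rw [← hk]; ring⟩

/-- The normalising constant. -/
noncomputable def kc (α : ℝ) : ℝ := 1 / (π * Real.Gamma α)

lemma kc_pos {α : ℝ} (hα : 0 < α) : 0 < kc α := by
  have := Real.Gamma_pos_of_pos hα
  unfold kc; positivity

lemma K_one {α x : ℝ} (hx : cos x = 1) : Kker α x = 0 := by
  unfold Kker
  rw [if_pos ((cos_eq_one_iff' x).mpr hx)]

lemma K_eq {α x : ℝ} (hx : cos x < 1) :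
    Kker α x = kc α * ∫ t in Ioi (0:ℝ), t ^ (α - 1) * Fk t x := by
  unfold Kker
  rw [if_neg (fun h => hx.ne ((cos_eq_one_iff' x).mp h)), kc]
  congr 1
  refine setIntegral_congr_fun measurableSet_Ioi fun t ht => ?_
  rw [mul_div_assoc, Fk_eq ht]

lemma K_congr {α x y : ℝ} (h : cos x = cos y) : Kker α x = Kker α y := by
  rcases (Real.cos_le_one x).lt_or_eq with h1 | h1
  · rw [K_eq h1, K_eq (h ▸ h1)]
    simp only [Fk, h]
  · rw [K_one h1, K_one (h ▸ h1)]

lemma K_even (α x : ℝ) : Kker α (-x) = Kker α x := K_congr (Real.cos_neg x)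

lemma K_periodic (α : ℝ) : Function.Periodic (Kker α) (2 * π) :=
  fun x => K_congr (Real.cos_periodic x)

lemma K_lt {α : ℝ} (hα : α ∈ Ioo (0:ℝ) 1) {x y : ℝ} (h : cos x < cos y) (hy : cos y < 1) :
    Kker α x < Kker α y := by
  have hx := h.trans hy
  rw [K_eq hx, K_eq hy]
  apply mul_lt_mul_of_pos_left _ (kc_pos hα.1)
  have hpos : ∀ t ∈ Ioi (0:ℝ), 0 < t ^ (α - 1) * Fk t y - t ^ (α - 1) * Fk t x := by
    intro t ht
    have := Fk_lt ht h
    have hp : 0 < t ^ (α - 1) := Real.rpow_pos_of_pos ht _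
    nlinarith
  rw [← sub_pos, ← integral_sub (Fk_int hα hy) (Fk_int hα hx)]
  rw [setIntegral_pos_iff_support_of_nonneg_ae]
  · refine lt_of_lt_of_le (b := volume (Ioi (0:ℝ))) (by simp) (measure_mono ?_)
    intro t ht
    exact ⟨(hpos t ht).ne', ht⟩
  · exact (ae_restrict_iff' measurableSet_Ioi).mpr
      (Eventually.of_forall fun t ht => (hpos t ht).le)
  · exact (Fk_int hα hy).sub (Fk_int hα hx)

lemma cos_lt_one_of {x : ℝ} (h0 : 0 < x) (h1 : x ≤ 3 * π / 2) : cos x < 1 := by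
  have := one_sub_cos_lower h0.le h1
  have : 0 < x ^ 2 := by positivity
  linarith

lemma K_bound {α : ℝ} (hα : α ∈ Ioo (0:ℝ) 1) :
    ∃ C > 0, ∀ x, 0 < x → x ≤ 3 * π / 2 → |Kker α x| ≤ C * x ^ (α - 1) := by
  have hk := kc_pos hα.1
  have h1 : 0 < 1 - α := by linarith [hα.2]
  have h0 := hα.1
  refine ⟨kc α * (30 * (1 / α + 1 / (1 - α))), by positivity, fun x hx hx1 => ?_⟩
  rw [K_eq (cos_lt_one_of hx hx1), abs_mul, abs_of_pos hk, mul_assoc, mul_assoc]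
  gcongr
  refine (wint (k := 1) (C := 30) hα.1 hα.2 hx (Fk_cont x) ?_).2
  intro t ht
  rw [Real.rpow_neg_one, ← div_eq_mul_inv]
  rcases le_total t x with h | h
  · rw [max_eq_right h]; exact Fk_bound_x ht h hx1
  · rw [max_eq_left h]
    refine (Fk_bound_t ht x).trans ?_
    gcongr
    norm_num

lemma K_second {α : ℝ} (hα : α ∈ Ioo (0:ℝ) 1) :
    ∃ C > 0, ∀ a b y, 0 ≤ a → a ≤ b → 2 * b ≤ y → 0 < y → y ≤ π →
      |(Kker α (y + b) + Kker α (y - b)) - (Kker α (y + a) + Kker α (y - a))|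
        ≤ C * ((b - a) * b) * y ^ (α - 3) := by
  have hk := kc_pos hα.1
  have h1 : 0 < 3 - α := by linarith [hα.2]
  have h0 := hα.1
  refine ⟨kc α * (32000 * (1 / α + 1 / (3 - α))), by positivity, fun a b y ha hab hb hy hyp => ?_⟩
  have c1 : cos (y + b) < 1 := cos_lt_one_of (by linarith) (by linarith)
  have c2 : cos (y - b) < 1 := cos_lt_one_of (by linarith) (by linarith)
  have c3 : cos (y + a) < 1 := cos_lt_one_of (by linarith) (by linarith)
  have c4 : cos (y - a) < 1 := cos_lt_one_of (by linarith) (by linarith)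
  have i1 := Fk_int hα c1
  have i2 := Fk_int hα c2
  have i3 := Fk_int hα c3
  have i4 := Fk_int hα c4
  rw [K_eq c1, K_eq c2, K_eq c3, K_eq c4, ← mul_add, ← mul_add, ← mul_sub, abs_mul, abs_of_pos hk,
    mul_assoc, mul_assoc, ← integral_add i1 i2, ← integral_add i3 i4]
  have hsub := integral_sub (i1.add i2) (i3.add i4)
  simp only [Pi.add_apply] at hsub
  rw [← hsub]
  gcongr
  have hw := (wint (k := 3) (C := 32000 * ((b - a) * b)) (x := y) hα.1 (by linarith) hy
    (g := fun t => (Fk t (y + b) + Fk t (y - b)) - (Fk t (y + a) + Fk t (y - a)))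
    (((Fk_cont _).add (Fk_cont _)).sub ((Fk_cont _).add (Fk_cont _))) ?_).2
  · have e : ∀ t : ℝ, t ^ (α - 1) * Fk t (y + b) + t ^ (α - 1) * Fk t (y - b) -
        (t ^ (α - 1) * Fk t (y + a) + t ^ (α - 1) * Fk t (y - a)) = t ^ (α - 1) *
        ((Fk t (y + b) + Fk t (y - b)) - (Fk t (y + a) + Fk t (y - a))) := fun t => by ring
    simp only [e]
    refine hw.trans (le_of_eq (by ring))
  · intro t ht
    refine (Fk_second ht ha hab hb hy hyp).trans (le_of_eq ?_)
    have : 0 < max t y := lt_max_of_lt_left ht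
    have e3 : (max t y) ^ (3:ℝ) = (max t y) ^ 3 := by exact_mod_cast Real.rpow_natCast _ 3
    rw [Real.rpow_neg this.le, div_eq_mul_inv, e3]

lemma K_lower {α : ℝ} (hα : α ∈ Ioo (0:ℝ) 1) :
    ∃ C > 0, ∀ s, 0 < s → s ≤ 1 → C * s ^ (α - 1) ≤ Kker α s - Kker α (2 * s) := by
  have hk := kc_pos hα.1
  have h0 := hα.1
  have h1 := hα.2
  refine ⟨kc α * (2 ^ (α - 1) / 40000), by positivity, fun s hs hs1 => ?_⟩
  have hpi := Real.pi_gt_three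
  have c1 : cos s < 1 := cos_lt_one_of hs (by linarith)
  have c2 : cos (2 * s) < 1 := cos_lt_one_of (by linarith) (by linarith)
  have hcc : cos (2 * s) < cos s := Real.cos_lt_cos_of_nonneg_of_le_pi hs.le (by linarith)
    (by linarith)
  have i1 := Fk_int hα c1
  have i2 := Fk_int hα c2
  rw [K_eq c1, K_eq c2, ← mul_sub, mul_assoc, ← integral_sub i1 i2]
  gcongr
  have hle : ∫ t in Ioc s (2 * s), (2 * s) ^ (α - 1) * (1 / (40000 * s)) ≤
      ∫ t in Ioc s (2 * s), (t ^ (α - 1) * Fk t s - t ^ (α - 1) * Fk t (2 * s)) := by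
    refine setIntegral_mono_on
      (continuousOn_const.integrableOn_Icc.mono_set Ioc_subset_Icc_self) ((i1.sub i2).mono_set ?_) measurableSet_Ioc ?_
    · intro t ht; exact hs.trans ht.1
    · intro t ht
      have ht0 : 0 < t := hs.trans ht.1
      rw [← mul_sub]
      have e1 := Fk_lower hs hs1 ht.1.le ht.2
      have e2 : (2 * s) ^ (α - 1) ≤ t ^ (α - 1) :=
        Real.rpow_le_rpow_of_nonpos ht0 ht.2 (by linarith)
      have e3 : 0 < (2 * s) ^ (α - 1) := Real.rpow_pos_of_pos (by linarith) _
      have e4 : 0 < 1 / (40000 * s) := by positivity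
      exact mul_le_mul e2 e1 e4.le (e3.le.trans e2)
  have hle2 : ∫ t in Ioc s (2 * s), (t ^ (α - 1) * Fk t s - t ^ (α - 1) * Fk t (2 * s)) ≤
      ∫ t in Ioi (0:ℝ), (t ^ (α - 1) * Fk t s - t ^ (α - 1) * Fk t (2 * s)) := by
    apply setIntegral_mono_set (i1.sub i2)
    · refine (ae_restrict_iff' measurableSet_Ioi).mpr (Eventually.of_forall fun t ht => ?_)
      have := Fk_lt ht hcc
      have hp : 0 < t ^ (α - 1) := Real.rpow_pos_of_pos ht _
      simp only [Pi.zero_apply, Pi.sub_apply]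
      nlinarith
    · exact Eventually.of_forall (fun t ht => hs.trans ht.1)
  refine le_trans (le_of_eq ?_) (hle.trans hle2)
  rw [setIntegral_const, Real.mul_rpow (by norm_num) hs.le]
  have : volume.real (Ioc s (2 * s)) = s := by
    rw [Real.volume_real_Ioc_of_le (by linarith)]; ring
  rw [this, smul_eq_mul]
  field_simp

lemma K_intervalIntegrable {α : ℝ} (hα : α ∈ Ioo (0:ℝ) 1) (a b : ℝ) :
    IntervalIntegrable (Kker α) volume a b := by
  obtain ⟨C, hC, hK⟩ := K_bound hα
  have hpi := Real.pi_pos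
  have h1 : IntervalIntegrable (Kker α) volume 0 π := by
    rw [intervalIntegrable_iff_integrableOn_Ioc_of_le hpi.le]
    have hd : IntegrableOn (fun x : ℝ => C * x ^ (α - 1)) (Ioc 0 π) := by
      have := (intervalIntegral.intervalIntegrable_rpow' (a := 0) (b := π) (r := α - 1)
        (by linarith [hα.1]))
      rw [intervalIntegrable_iff_integrableOn_Ioc_of_le hpi.le] at this
      exact this.const_mul _
    refine hd.mono' ?_ ?_
    · refine (aemeasurable_restrict_of_antitoneOn measurableSet_Ioc ?_).aestronglyMeasurable
      intro x hx y hy hxy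
      rcases hxy.eq_or_lt with h | h
      · rw [h]
      · exact (K_lt hα (Real.cos_lt_cos_of_nonneg_of_le_pi hx.1.le hy.2 h)
          (cos_lt_one_of hx.1 (by linarith [hx.2]))).le
    · refine (ae_restrict_iff' measurableSet_Ioc).mpr (Eventually.of_forall fun x hx => ?_)
      exact hK x hx.1 (by linarith [hx.2])
  have h2 : IntervalIntegrable (Kker α) volume (-π) 0 := by
    have := h1.comp_sub_left 0
    simp only [zero_sub, K_even, sub_zero] at this
    exact this.symm
  refine (K_periodic α).intervalIntegrable (by positivity) (t := -π) ?_ a b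
  have : -π + 2 * π = π := by ring
  rw [this]
  exact h2.trans h1

/-- Convolution with the kernel over one period. -/
noncomputable def Tc (α : ℝ) (φ : ℝ → ℝ) (x : ℝ) : ℝ := ∫ y in (-π)..π, Kker α (x - y) * φ y

/-- Abstract wave profile. -/
structure Wave (α : ℝ) (G φ : ℝ → ℝ) : Prop where
  cont : Continuous φ
  per : Function.Periodic φ (2 * π)
  even : ∀ x, φ (-x) = φ x
  anti : AntitoneOn φ (Icc 0 π)
  eqn : ∀ a b, Tc α φ a - Tc α φ b = G (φ a) - G (φ b)
  lt : φ π < φ 0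

lemma K_sub_int {α : ℝ} (hα : α ∈ Ioo (0:ℝ) 1) (x a b : ℝ) :
    IntervalIntegrable (fun y => Kker α (x - y)) volume a b := by
  have := (K_intervalIntegrable hα (x - a) (x - b)).comp_sub_left x
  simpa using this

lemma K_add_int {α : ℝ} (hα : α ∈ Ioo (0:ℝ) 1) (x a b : ℝ) :
    IntervalIntegrable (fun y => Kker α (x + y)) volume a b := by
  have := (K_intervalIntegrable hα (x + a) (x + b)).comp_add_left x
  simpa using this

lemma phi_congr {φ : ℝ → ℝ} (per : Function.Periodic φ (2 * π)) (even : ∀ x, φ (-x) = φ x)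
    {x y : ℝ} (h : cos x = cos y) : φ x = φ y := by
  rw [Real.cos_eq_cos_iff] at h
  obtain ⟨k, h | h⟩ := h
  · rw [h, show 2 * (k:ℝ) * π + x = x + k * (2 * π) by ring]
    exact ((per.int_mul k) x).symm
  · rw [h, show 2 * (k:ℝ) * π - x = -x + k * (2 * π) by ring]
    rw [(per.int_mul k) (-x), even]

lemma phi_cos {φ : ℝ → ℝ} (per : Function.Periodic φ (2 * π)) (even : ∀ x, φ (-x) = φ x)
    (anti : AntitoneOn φ (Icc 0 π)) {x y : ℝ} (h : cos x ≤ cos y) : φ x ≤ φ y := by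
  have e : ∀ x, φ x = φ (arccos (cos x)) := fun x =>
    phi_congr per even (Real.cos_arccos (Real.neg_one_le_cos x) (Real.cos_le_one x)).symm
  rw [e x, e y]
  exact anti ⟨Real.arccos_nonneg _, Real.arccos_le_pi _⟩
    ⟨Real.arccos_nonneg _, Real.arccos_le_pi _⟩ (Real.arccos_le_arccos h)

lemma period_shift {f : ℝ → ℝ} (hf : Function.Periodic f (2 * π)) (m : ℝ) :
    ∫ z in (-π)..π, f (m + z) = ∫ y in (-π)..π, f y := by
  rw [intervalIntegral.integral_comp_add_left]
  have := hf.intervalIntegral_add_eq (m + -π) (-π)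
  rw [show m + -π + 2 * π = m + π by ring, show -π + 2 * π = π by ring] at this
  exact this

lemma fold_int {f : ℝ → ℝ} (hf : ∀ a b, IntervalIntegrable f volume a b) :
    ∫ z in (-π)..π, f z = ∫ z in (0:ℝ)..π, (f z + f (-z)) := by
  have h1 : IntervalIntegrable (fun z => f (-z)) volume 0 π := by
    have := (hf 0 (-π)).comp_sub_left 0
    simpa using this
  rw [intervalIntegral.integral_add (hf _ _) h1, intervalIntegral.integral_comp_neg,
    neg_zero, add_comm, intervalIntegral.integral_add_adjacent_intervals (hf _ _) (hf _ _)]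

lemma formulaA {α : ℝ} (hα : α ∈ Ioo (0:ℝ) 1) {φ : ℝ → ℝ} (hc : Continuous φ)
    (per : Function.Periodic φ (2 * π)) (m h : ℝ) :
    Tc α φ (m + h) - Tc α φ (m - h) =
      ∫ z in (0:ℝ)..π, (Kker α (h - z) - Kker α (h + z)) * (φ (m + z) - φ (m - z)) := by
  have key : ∀ x, Tc α φ x = ∫ z in (-π)..π, Kker α (x - m - z) * φ (m + z) := by
    intro x
    have hp : Function.Periodic (fun y => Kker α (x - y) * φ y) (2 * π) := by
      intro y
      simp only
      rw [per y, show x - (y + 2 * π) = x - y - 2 * π by ring, (K_periodic α).sub_eq]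
    rw [Tc, ← period_shift hp m]
    congr 1; ext z
    rw [show x - (m + z) = x - m - z by ring]
  have hi : ∀ x a b, IntervalIntegrable (fun z => Kker α (x - z) * φ (m + z)) volume a b :=
    fun x a b => (K_sub_int hα x a b).mul_continuousOn (by fun_prop)
  rw [key, key, show m + h - m = h by ring, show m - h - m = -h by ring,
    ← intervalIntegral.integral_sub (hi _ _ _) (hi _ _ _),
    fold_int (fun a b => (hi h a b).sub (hi (-h) a b))]
  congr 1; ext z
  have e1 : Kker α (-h - z) = Kker α (h + z) := by rw [← K_even α (h + z)]; ring_nf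
  have e2 : Kker α (-h - -z) = Kker α (h - z) := by rw [← K_even α (h - z)]; ring_nf
  rw [e1, e2, sub_neg_eq_add, ← sub_eq_add_neg]
  ring

lemma kdiff_nonneg {α : ℝ} (hα : α ∈ Ioo (0:ℝ) 1) {h z : ℝ} (h0 : 0 < h) (h1 : h < π)
    (z0 : 0 ≤ z) (z1 : z ≤ π) (hz : z ≠ h) : Kker α (h + z) ≤ Kker α (h - z) := by
  have hc1 : cos (h - z) < 1 := by
    rcases lt_or_gt_of_ne hz with hh | hh
    · exact cos_lt_one_of (by linarith) (by linarith)
    · rw [← Real.cos_neg]; exact cos_lt_one_of (by linarith) (by linarith)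
  have hle : cos (h + z) ≤ cos (h - z) := by
    rw [Real.cos_add, Real.cos_sub]
    have := Real.sin_nonneg_of_nonneg_of_le_pi h0.le h1.le
    have := Real.sin_nonneg_of_nonneg_of_le_pi z0 z1
    nlinarith
  rcases hle.eq_or_lt with e | e
  · exact (K_congr e).le
  · exact (K_lt hα e hc1).le

lemma kdiff_pos {α : ℝ} (hα : α ∈ Ioo (0:ℝ) 1) {h z : ℝ} (h0 : 0 < h) (h1 : h < π)
    (z0 : 0 < z) (z1 : z < π) (hz : z ≠ h) : Kker α (h + z) < Kker α (h - z) := by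
  have hc1 : cos (h - z) < 1 := by
    rcases lt_or_gt_of_ne hz with hh | hh
    · exact cos_lt_one_of (by linarith) (by linarith)
    · rw [← Real.cos_neg]; exact cos_lt_one_of (by linarith) (by linarith)
  have hle : cos (h + z) < cos (h - z) := by
    rw [Real.cos_add, Real.cos_sub]
    have a := Real.sin_pos_of_pos_of_lt_pi h0 h1
    have b := Real.sin_pos_of_pos_of_lt_pi z0 z1
    nlinarith [mul_pos a b]
  exact K_lt hα hle hc1

lemma phidiff_nonneg {φ : ℝ → ℝ} (per : Function.Periodic φ (2 * π)) (even : ∀ x, φ (-x) = φ x)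
    (anti : AntitoneOn φ (Icc 0 π)) {m z : ℝ} (m0 : -π ≤ m) (m1 : m ≤ 0) (z0 : 0 ≤ z)
    (z1 : z ≤ π) : φ (m - z) ≤ φ (m + z) := by
  apply phi_cos per even anti
  rw [Real.cos_add, Real.cos_sub]
  have := Real.sin_nonneg_of_nonneg_of_le_pi (x := -m) (by linarith) (by linarith)
  rw [Real.sin_neg] at this
  have := Real.sin_nonneg_of_nonneg_of_le_pi z0 z1
  nlinarith

lemma ae_ne (a : ℝ) (μ : Measure ℝ) [NullSingletonClass μ] : ∀ᵐ z ∂μ, z ≠ a := by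
  simp [ae_iff, measure_singleton]

/-- A translation symmetry incompatible with monotonicity. -/
lemma not_period {α : ℝ} {G φ : ℝ → ℝ} (W : Wave α G φ) {d : ℝ} (d0 : 0 < d) (d1 : d ≤ π)
    (hd : Function.Periodic φ d) : False := by
  have hpi := Real.pi_pos
  have hn : (⌊π / d⌋₊ : ℝ) * d ≤ π := by
    have := Nat.floor_le (show 0 ≤ π / d by positivity)
    rwa [le_div_iff₀ d0] at this
  have hn2 : π < (⌊π / d⌋₊ : ℝ) * d + d := by
    have := Nat.lt_floor_add_one (π / d)
    rw [div_lt_iff₀ d0] at this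
    linarith
  have h1 : φ (π - (⌊π / d⌋₊ : ℝ) * d) = φ π := hd.sub_nat_mul_eq _
  have h2 : φ d = φ 0 := by have := hd 0; rwa [zero_add] at this
  have h3 : φ d ≤ φ (π - (⌊π / d⌋₊ : ℝ) * d) :=
    W.anti ⟨by linarith, by linarith [mul_nonneg (Nat.cast_nonneg (α := ℝ) ⌊π / d⌋₊) d0.le]⟩
      ⟨d0.le, d1⟩ (by linarith)
  linarith [W.lt]

lemma wave_strict {α : ℝ} (hα : α ∈ Ioo (0:ℝ) 1) {G φ : ℝ → ℝ} (W : Wave α G φ) :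
    StrictMonoOn φ (Ioo (-π) 0) := by
  intro x1 hx1 x2 hx2 h12
  have hpi := Real.pi_pos
  have hle : φ x1 ≤ φ x2 := by
    rw [← W.even x1, ← W.even x2]
    exact W.anti ⟨by linarith [hx2.2], by linarith [hx2.1]⟩
      ⟨by linarith [hx1.2], by linarith [hx1.1]⟩ (by linarith)
  rcases hle.lt_or_eq with hlt | heq
  · exact hlt
  exfalso
  set m := (x1 + x2) / 2 with hm
  set h := (x2 - x1) / 2 with hh
  have m0 : -π < m := by linarith [hx1.1, hx2.1]
  have m1 : m < 0 := by linarith [hx1.2, hx2.2]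
  have h0 : 0 < h := by linarith
  have h1 : h < π := by linarith [hx1.1, hx2.2]
  have hA := formulaA hα W.cont W.per m h
  rw [show m + h = x2 by rw [hm, hh]; ring, show m - h = x1 by rw [hm, hh]; ring,
    W.eqn, heq, sub_self] at hA
  have hIntg : IntervalIntegrable (fun z => (Kker α (h - z) - Kker α (h + z)) *
      (φ (m + z) - φ (m - z))) volume 0 π :=
    ((K_sub_int hα h 0 π).sub (K_add_int hα h 0 π)).mul_continuousOn
      (by have := W.cont; fun_prop)
  have hnn : 0 ≤ᵐ[volume.restrict (Ioc 0 π)] (fun z => (Kker α (h - z) - Kker α (h + z)) *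
      (φ (m + z) - φ (m - z))) := by
    filter_upwards [ae_restrict_mem measurableSet_Ioc, ae_ne h _] with z hz hne
    exact mul_nonneg (sub_nonneg.mpr (kdiff_nonneg hα h0 h1 hz.1.le hz.2 hne))
      (sub_nonneg.mpr (phidiff_nonneg W.per W.even W.anti m0.le m1.le hz.1.le hz.2))
  rw [eq_comm, intervalIntegral.integral_eq_zero_iff_of_le_of_nonneg_ae hpi.le hnn hIntg] at hA
  have hd : (fun z => φ (m + z)) =ᵐ[volume.restrict (Ioc 0 π)] (fun z => φ (m - z)) := by
    filter_upwards [ae_restrict_mem measurableSet_Ioc, ae_ne h _, ae_ne π _, hA] with z hz hne hnp hz0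
    have := kdiff_pos hα h0 h1 hz.1 (lt_of_le_of_ne hz.2 hnp) hne
    simp only [Pi.zero_apply, mul_eq_zero] at hz0
    rcases hz0 with e | e
    · linarith
    · linarith
  have hE := Measure.eqOn_Ioc_of_ae_eq volume hd (by have := W.cont; fun_prop)
    (by have := W.cont; fun_prop)
  have hE' : ∀ z ∈ Ioc (-π) π, φ (m + z) = φ (m - z) := by
    intro z hz
    rcases lt_trichotomy z 0 with hz0 | hz0 | hz0
    · have := hE (x := -z) ⟨by linarith, by linarith [hz.1]⟩
      simp only [sub_neg_eq_add] at this
      rw [← this, ← sub_eq_add_neg]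
    · simp [hz0]
    · exact hE ⟨hz0, hz.2⟩
  have hall : ∀ z, φ (m + z) - φ (m - z) = 0 := by
    intro z
    have hp : Function.Periodic (fun z => φ (m + z) - φ (m - z)) (2 * π) := by
      intro z
      simp only
      rw [← add_assoc, W.per, show m - (z + 2 * π) = m - z - 2 * π by ring, W.per.sub_eq]
    obtain ⟨y, hy, hye⟩ := hp.exists_mem_Ioc (by positivity) z (-π)
    rw [hye, hE' y ⟨hy.1, by linarith [hy.2]⟩, sub_self]
  have hP : Function.Periodic φ (-(2 * m)) := by
    intro x
    have := hall (x - m)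
    rw [show m + (x - m) = x by ring, show m - (x - m) = -(x + -(2 * m)) by ring, W.even] at this
    linarith
  rcases le_total (-(2 * m)) π with hle | hle
  · exact not_period W (by linarith) hle hP
  · refine not_period W (d := 2 * π - -(2 * m)) (by linarith) (by linarith) ?_
    intro x
    rw [show x + (2 * π - -(2 * m)) = x + 2 * π - -(2 * m) by ring, hP.sub_eq, W.per]

lemma wave_lower {α : ℝ} (hα : α ∈ Ioo (0:ℝ) 1) {G φ : ℝ → ℝ} (W : Wave α G φ) {μ C2 : ℝ}
    (hμ : 0 < μ) (h0 : φ 0 = μ) (hC2 : 0 < C2)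
    (hG : ∀ s t, 0 ≤ t → t ≤ s → s ≤ μ → G s - G t ≤ C2 * ((s - t) * (μ - t))) :
    ∃ δ > 0, δ ≤ 1 ∧ ∃ c > 0, ∀ x, 0 ≤ x → x ≤ δ → c * x ^ α ≤ μ - φ x := by
  have hpi := Real.pi_gt_three
  obtain ⟨C, hC, hK⟩ := K_lower hα
  have hev : ∀ᶠ x in 𝓝 (0:ℝ), 0 < φ x :=
    W.cont.continuousAt.eventually (lt_mem_nhds (by rw [h0]; exact hμ))
  obtain ⟨η, hη, hball⟩ := Metric.eventually_nhds_iff.mp hev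
  refine ⟨min 1 (η / 2), by positivity, min_le_left _ _, C / C2 * (1 / 4) ^ α, by positivity, ?_⟩
  intro x hx hxδ
  rcases hx.eq_or_lt with hx0 | hx0
  · rw [← hx0, Real.zero_rpow hα.1.ne', h0]; simp
  have hx1 : x ≤ 1 := hxδ.trans (min_le_left _ _)
  have hxη : x ≤ η / 2 := hxδ.trans (min_le_right _ _)
  have hφx : 0 < φ x := hball (by rw [Real.dist_eq, sub_zero, abs_of_pos hx0]; linarith)
  set h := x / 4 with hh
  have hh0 : 0 < h := by positivity
  have hx4 : x = 4 * h := by rw [hh]; ring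
  have hlt : φ (4 * h) < φ (2 * h) := by
    have := wave_strict hα W (a := -(4 * h)) (b := -(2 * h)) ⟨by linarith, by linarith⟩
      ⟨by linarith, by linarith⟩ (by linarith)
    rwa [W.even, W.even] at this
  have hA := formulaA hα W.cont W.per (-(3 * h)) h
  rw [show -(3 * h) + h = -(2 * h) by ring, show -(3 * h) - h = -(4 * h) by ring, W.eqn,
    W.even, W.even] at hA
  have hIntg : ∀ a b, IntervalIntegrable (fun z => (Kker α (h - z) - Kker α (h + z)) *
      (φ (-(3 * h) + z) - φ (-(3 * h) - z))) volume a b := fun a b =>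
    ((K_sub_int hα h a b).sub (K_add_int hα h a b)).mul_continuousOn
      (by have := W.cont; fun_prop)
  have hnn : 0 ≤ᵐ[volume.restrict (Ioc 0 π)] (fun z => (Kker α (h - z) - Kker α (h + z)) *
      (φ (-(3 * h) + z) - φ (-(3 * h) - z))) := by
    filter_upwards [ae_restrict_mem measurableSet_Ioc, ae_ne h _] with z hz hne
    exact mul_nonneg (sub_nonneg.mpr (kdiff_nonneg hα hh0 (by linarith) hz.1.le hz.2 hne))
      (sub_nonneg.mpr (phidiff_nonneg W.per W.even W.anti (by linarith) (by linarith)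
        hz.1.le hz.2))
  have hI1 : ∫ z in h..(2 * h), (Kker α (h - z) - Kker α (h + z)) *
      (φ (-(3 * h) + z) - φ (-(3 * h) - z)) ≤ G (φ (2 * h)) - G (φ (4 * h)) := by
    rw [hA]
    exact intervalIntegral.integral_mono_interval hh0.le (by linarith) (by linarith) hnn
      (hIntg _ _)
  have hI2 : ∫ z in h..(2 * h), (C * h ^ (α - 1)) * (φ (2 * h) - φ (4 * h)) ≤
      ∫ z in h..(2 * h), (Kker α (h - z) - Kker α (h + z)) *
      (φ (-(3 * h) + z) - φ (-(3 * h) - z)) := by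
    refine intervalIntegral.integral_mono_on_of_le_Ioo (by linarith) (by simp) (hIntg _ _) ?_
    intro z hz
    have e1 : Kker α h ≤ Kker α (h - z) := by
      rw [← K_even α (h - z), show -(h - z) = z - h by ring]
      exact (K_lt hα (Real.cos_lt_cos_of_nonneg_of_le_pi (by linarith [hz.1]) (by linarith)
        (by linarith [hz.2])) (cos_lt_one_of (by linarith [hz.1]) (by linarith [hz.2]))).le
    have e2 : Kker α (h + z) ≤ Kker α (2 * h) :=
      (K_lt hα (Real.cos_lt_cos_of_nonneg_of_le_pi (by linarith [hz.1]) (by linarith [hz.2])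
        (by linarith [hz.1])) (cos_lt_one_of (by linarith) (by linarith))).le
    have e3 := hK h hh0 (by linarith)
    have e4 : φ (2 * h) ≤ φ (-(3 * h) + z) := by
      rw [← W.even (-(3 * h) + z)]
      exact W.anti ⟨by linarith [hz.2], by linarith [hz.1]⟩ ⟨by linarith, by linarith⟩
        (by linarith [hz.1])
    have e5 : φ (-(3 * h) - z) ≤ φ (4 * h) := by
      rw [← W.even (-(3 * h) - z)]
      exact W.anti ⟨by linarith, by linarith⟩ ⟨by linarith [hz.1], by linarith [hz.2]⟩
        (by linarith [hz.1])
    have e6 : 0 < C * h ^ (α - 1) := by positivity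
    apply mul_le_mul (by linarith) (by linarith) (by linarith) (by linarith)
  rw [intervalIntegral.integral_const, smul_eq_mul] at hI2
  have hu := hG (φ (2 * h)) (φ (4 * h)) (by rw [← hx4]; exact hφx.le) hlt.le
    (by rw [← h0]; exact W.anti ⟨le_rfl, by linarith⟩ ⟨by linarith, by linarith⟩ (by linarith))
  have hfin : C * h ^ α ≤ C2 * (μ - φ (4 * h)) := by
    have hd : 0 < φ (2 * h) - φ (4 * h) := by linarith
    refine le_of_mul_le_mul_left ?_ hd
    have e : h ^ α = h * h ^ (α - 1) := by
      rw [← Real.rpow_one_add' hh0.le (by linarith [hα.1])]; ring_nf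
    rw [e]
    nlinarith
  rw [← hx4] at hfin
  have e : h ^ α = (1 / 4) ^ α * x ^ α := by
    rw [← Real.mul_rpow (by norm_num) hx]; congr 1; rw [hh]; ring
  rw [e] at hfin
  rw [div_mul_eq_mul_div, div_mul_eq_mul_div, div_le_iff₀ hC2]
  linarith

/-- The symmetrised difference kernel. -/
noncomputable def Dk (α a b y : ℝ) : ℝ :=
  (Kker α (b - y) + Kker α (b + y)) - (Kker α (a - y) + Kker α (a + y))

lemma Dk_int {α : ℝ} (hα : α ∈ Ioo (0:ℝ) 1) (a b r s : ℝ) :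
    IntervalIntegrable (Dk α a b) volume r s :=
  ((K_sub_int hα b r s).add (K_add_int hα b r s)).sub
    ((K_sub_int hα a r s).add (K_add_int hα a r s))

lemma K_L1_aux {α : ℝ} (hα : α ∈ Ioo (0:ℝ) 1) :
    ∃ C > 0, ∀ h, 0 < h → h ≤ π / 2 →
      ∫ z in (0:ℝ)..π, (Kker α (h - z) - Kker α (h + z)) ≤ C * h ^ α := by
  obtain ⟨C, hC, hK⟩ := K_bound hα
  have hpi := Real.pi_pos
  have h0 := hα.1
  refine ⟨2 * (C / α) + 2 * C, by positivity, fun h hh hh1 => ?_⟩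
  have hi := K_intervalIntegrable hα
  rw [intervalIntegral.integral_sub (K_sub_int hα h 0 π) (K_add_int hα h 0 π),
    intervalIntegral.integral_comp_sub_left, intervalIntegral.integral_comp_add_left, sub_zero,
    add_zero,
    ← intervalIntegral.integral_add_adjacent_intervals (hi (h - π) (-h)) (hi (-h) h),
    ← intervalIntegral.integral_add_adjacent_intervals (hi h (π - h)) (hi (π - h) (h + π))]
  have e1 : ∫ x in (h - π)..(-h), Kker α x = ∫ x in h..(π - h), Kker α x := by
    have := intervalIntegral.integral_comp_neg (a := h) (b := π - h) (Kker α)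
    simp only [K_even] at this
    rw [this]; congr 1; ring
  have e2 : ∫ x in (-h)..h, Kker α x = 2 * ∫ x in (0:ℝ)..h, Kker α x := by
    rw [← intervalIntegral.integral_add_adjacent_intervals (hi (-h) 0) (hi 0 h)]
    have := intervalIntegral.integral_comp_neg (a := 0) (b := h) (Kker α)
    simp only [K_even, neg_zero] at this
    rw [← this]; ring
  have e3 : ∫ x in (0:ℝ)..h, Kker α x ≤ C / α * h ^ α := by
    have : ∫ x in (0:ℝ)..h, Kker α x ≤ ∫ x in (0:ℝ)..h, C * x ^ (α - 1) := by
      refine intervalIntegral.integral_mono_on_of_le_Ioo hh.le (hi _ _)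
        ((intervalIntegral.intervalIntegrable_rpow' (by linarith)).const_mul C) ?_
      intro x hx
      exact (le_abs_self _).trans (hK x hx.1 (by linarith [hx.2]))
    refine this.trans (le_of_eq ?_)
    rw [intervalIntegral.integral_const_mul, integral_rpow (Or.inl (by linarith)),
      sub_add_cancel, Real.zero_rpow h0.ne']
    ring
  have e4 : |∫ x in (π - h)..(h + π), Kker α x| ≤ 2 * C * h ^ α := by
    have := intervalIntegral.norm_integral_le_of_norm_le_const (a := π - h) (b := h + π)
      (f := Kker α) (C := C * h ^ (α - 1)) ?_
    · rw [Real.norm_eq_abs] at this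
      refine this.trans (le_of_eq ?_)
      have e : h ^ α = h * h ^ (α - 1) := by
        rw [← Real.rpow_one_add' hh.le (by linarith [hα.1])]; ring_nf
      rw [show h + π - (π - h) = 2 * h by ring, abs_of_pos (by positivity), e]
      ring
    · intro x hx
      rw [uIoc_of_le (by linarith)] at hx
      refine (hK x (by linarith [hx.1]) (by linarith [hx.2])).trans ?_
      exact mul_le_mul_of_nonneg_left (Real.rpow_le_rpow_of_nonpos hh (by linarith [hx.1]) (by linarith [hα.2])) hC.le
  have e5 := (abs_le.mp e4).1
  rw [e1, e2]
  nlinarith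

lemma K_L1 {α : ℝ} (hα : α ∈ Ioo (0:ℝ) 1) :
    ∃ C > 0, ∀ a b, 0 ≤ a → a < b → b ≤ π →
      ∫ y in (0:ℝ)..π, |Dk α a b y| ≤ C * (b - a) ^ α := by
  obtain ⟨C, hC, hK⟩ := K_L1_aux hα
  have hpi := Real.pi_pos
  refine ⟨2 * C, by positivity, fun a b ha hab hb => ?_⟩
  set h := (b - a) / 2 with hh
  set m := (a + b) / 2 with hm
  have hh0 : 0 < h := by linarith
  have hg : ∀ r s, IntervalIntegrable (fun y => |Kker α (b - y) - Kker α (a - y)|) volume r s :=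
    fun r s => ((K_sub_int hα b r s).sub (K_sub_int hα a r s)).abs
  have hg2 : ∀ r s, IntervalIntegrable (fun y => |Kker α (b + y) - Kker α (a + y)|) volume r s :=
    fun r s => ((K_add_int hα b r s).sub (K_add_int hα a r s)).abs
  have hk : ∀ r s, IntervalIntegrable (fun z => |Kker α (h - z) - Kker α (h + z)|) volume r s :=
    fun r s => ((K_sub_int hα h r s).sub (K_add_int hα h r s)).abs
  have s1 : ∫ y in (0:ℝ)..π, |Dk α a b y| ≤
      ∫ y in (-π)..π, |Kker α (b - y) - Kker α (a - y)| := by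
    rw [fold_int hg]
    simp only [sub_neg_eq_add]
    refine intervalIntegral.integral_mono_on hpi.le (Dk_int hα a b 0 π).abs
      ((hg _ _).add (hg2 _ _)) fun y _ => ?_
    have : Dk α a b y = (Kker α (b - y) - Kker α (a - y)) + (Kker α (b + y) - Kker α (a + y)) := by
      unfold Dk; ring
    rw [this]
    exact abs_add_le _ _
  have s2 : ∫ y in (-π)..π, |Kker α (b - y) - Kker α (a - y)| =
      ∫ z in (-π)..π, |Kker α (h - z) - Kker α (h + z)| := by
    have hp : Function.Periodic (fun y => |Kker α (b - y) - Kker α (a - y)|) (2 * π) := by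
      intro y
      simp only
      rw [show b - (y + 2 * π) = b - y - 2 * π by ring, show a - (y + 2 * π) = a - y - 2 * π by ring,
        (K_periodic α).sub_eq, (K_periodic α).sub_eq]
    rw [← period_shift hp m]
    congr 1; ext z
    rw [show b - (m + z) = h - z by rw [hh, hm]; ring,
      show a - (m + z) = -(h + z) by rw [hh, hm]; ring, K_even]
  have s3 : ∫ z in (-π)..π, |Kker α (h - z) - Kker α (h + z)| =
      2 * ∫ z in (0:ℝ)..π, (Kker α (h - z) - Kker α (h + z)) := by
    rw [fold_int hk, ← intervalIntegral.integral_const_mul]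
    apply intervalIntegral.integral_congr_ae
    filter_upwards [ae_ne h _] with z hne hz
    rw [uIoc_of_le hpi.le] at hz
    rw [sub_neg_eq_add, ← sub_eq_add_neg, abs_sub_comm (Kker α (h + z)), abs_of_nonneg]
    · ring
    · exact sub_nonneg.mpr (kdiff_nonneg hα hh0 (by linarith) hz.1.le hz.2 hne)
  rw [s2, s3] at s1
  refine s1.trans ?_
  have := hK h hh0 (by linarith)
  have h2 : h ^ α ≤ (b - a) ^ α := Real.rpow_le_rpow hh0.le (by linarith) hα.1.le
  nlinarith

lemma formulaB {α : ℝ} (hα : α ∈ Ioo (0:ℝ) 1) {φ : ℝ → ℝ} (hc : Continuous φ)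
    (even : ∀ x, φ (-x) = φ x) (a b q : ℝ) :
    Tc α φ a - Tc α φ b = ∫ y in (0:ℝ)..π, Dk α a b y * (q - φ y) := by
  have hi : ∀ x r s, IntervalIntegrable (fun z => Kker α (x - z) * φ z) volume r s :=
    fun x r s => (K_sub_int hα x r s).mul_continuousOn (by fun_prop)
  have hper : Function.Periodic (fun y => Kker α (b - y)) (2 * π) := by
    intro y
    simp only
    rw [show b - (y + 2 * π) = b - y - 2 * π by ring, (K_periodic α).sub_eq]
  have h1 := period_shift hper (b - a)
  simp only [show ∀ z, b - (b - a + z) = a - z from fun z => by ring] at h1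
  have h2 : Tc α φ a - Tc α φ b =
      ∫ y in (-π)..π, (Kker α (b - y) - Kker α (a - y)) * (q - φ y) := by
    have e : ∀ y, (Kker α (b - y) - Kker α (a - y)) * (q - φ y) =
      q * (Kker α (b - y) - Kker α (a - y)) + (Kker α (a - y) * φ y - Kker α (b - y) * φ y) :=
      fun y => by ring
    simp only [e]
    rw [intervalIntegral.integral_add
      (((K_sub_int hα b _ _).sub (K_sub_int hα a _ _)).const_mul q) ((hi _ _ _).sub (hi _ _ _)),
      intervalIntegral.integral_const_mul,
      intervalIntegral.integral_sub (K_sub_int hα b _ _) (K_sub_int hα a _ _), h1,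
      intervalIntegral.integral_sub (hi _ _ _) (hi _ _ _), sub_self, mul_zero, zero_add]
    rfl
  rw [h2, fold_int fun r s => ((K_sub_int hα b r s).sub (K_sub_int hα a r s)).mul_continuousOn
    (by fun_prop)]
  congr 1; ext y
  rw [even, Dk, sub_neg_eq_add, sub_neg_eq_add]
  ring

lemma wave_key {α : ℝ} (hα : α ∈ Ioo (0:ℝ) 1) :
    ∃ C > 0, ∀ φ : ℝ → ℝ, Continuous φ → (∀ x, φ (-x) = φ x) → AntitoneOn φ (Icc 0 π) →
      ∀ a b A, 0 ≤ a → a < b → b ≤ π → 0 ≤ A → (∀ y ∈ Icc b π, φ 0 - φ y ≤ A * y ^ α) →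
      Tc α φ a - Tc α φ b ≤ C * A * b ^ α * (b - a) ^ α := by
  obtain ⟨C1, hC1, hK1⟩ := K_L1 hα
  obtain ⟨C2, hC2, hK2⟩ := K_second hα
  have hpi := Real.pi_pos
  have h1 : 0 < 2 - 2 * α := by linarith [hα.2]
  refine ⟨2 * C1 + C2 / (2 - 2 * α), by positivity, ?_⟩
  intro φ hc even anti a b A ha hab hb hA hu
  have hb0 : 0 < b := by linarith
  set r := min (2 * b) π with hr
  have hbr : b ≤ r := le_min (by linarith) hb
  have hr0 : 0 < r := by linarith
  have hrp : r ≤ π := min_le_right _ _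
  have hIntg : ∀ s t, IntervalIntegrable (fun y => Dk α a b y * (φ 0 - φ y)) volume s t :=
    fun s t => (Dk_int hα a b s t).mul_continuousOn (by fun_prop)
  have hba : 0 < (b - a) ^ α := Real.rpow_pos_of_pos (by linarith) _
  have hbα : 0 < b ^ α := Real.rpow_pos_of_pos hb0 _
  rw [formulaB hα hc even a b (φ 0),
    ← intervalIntegral.integral_add_adjacent_intervals (hIntg 0 r) (hIntg r π)]
  have near : ∫ y in (0:ℝ)..r, Dk α a b y * (φ 0 - φ y) ≤ 2 * C1 * A * b ^ α * (b - a) ^ α := by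
    have s1 : ∫ y in (0:ℝ)..r, Dk α a b y * (φ 0 - φ y) ≤
        ∫ y in (0:ℝ)..r, |Dk α a b y| * (φ 0 - φ r) := by
      refine intervalIntegral.integral_mono_on hr0.le (hIntg _ _)
        ((Dk_int hα a b _ _).abs.mul_const _) fun y hy => ?_
      have e1 : φ r ≤ φ y := anti ⟨hy.1, hy.2.trans hrp⟩ ⟨hr0.le, hrp⟩ hy.2
      have e2 : φ y ≤ φ 0 := anti ⟨le_rfl, hpi.le⟩ ⟨hy.1, hy.2.trans hrp⟩ hy.1
      calc _ ≤ |Dk α a b y| * (φ 0 - φ y) :=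
            mul_le_mul_of_nonneg_right (le_abs_self _) (by linarith)
        _ ≤ _ := mul_le_mul_of_nonneg_left (by linarith) (abs_nonneg _)
    have s2 : ∫ y in (0:ℝ)..r, |Dk α a b y| ≤ C1 * (b - a) ^ α :=
      (intervalIntegral.integral_mono_interval le_rfl hr0.le hrp
        (Eventually.of_forall fun y => abs_nonneg _) (Dk_int hα a b _ _).abs).trans
        (hK1 a b ha hab hb)
    have s3 : φ 0 - φ r ≤ A * (2 * b ^ α) := by
      refine (hu r ⟨hbr, hrp⟩).trans ?_
      gcongr
      calc r ^ α ≤ (2 * b) ^ α := Real.rpow_le_rpow hr0.le (min_le_left _ _) hα.1.le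
        _ = 2 ^ α * b ^ α := Real.mul_rpow (by norm_num) hb0.le
        _ ≤ 2 * b ^ α := by
          gcongr
          calc (2:ℝ) ^ α ≤ 2 ^ (1:ℝ) := Real.rpow_le_rpow_of_exponent_le (by norm_num) hα.2.le
            _ = 2 := Real.rpow_one 2
    have s4 : 0 ≤ φ 0 - φ r := sub_nonneg.mpr (anti ⟨le_rfl, hpi.le⟩ ⟨hr0.le, hrp⟩ hr0.le)
    rw [intervalIntegral.integral_mul_const] at s1
    calc _ ≤ _ := s1
      _ ≤ (C1 * (b - a) ^ α) * (A * (2 * b ^ α)) :=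
        mul_le_mul s2 s3 s4 (by positivity)
      _ = _ := by ring
  have far : ∫ y in r..π, Dk α a b y * (φ 0 - φ y) ≤
      C2 / (2 - 2 * α) * A * b ^ α * (b - a) ^ α := by
    have hz : (0:ℝ) ∉ uIcc r π := by
      rw [uIcc_of_le hrp]; intro h; linarith [h.1]
    have s1 : ∫ y in r..π, Dk α a b y * (φ 0 - φ y) ≤
        ∫ y in r..π, (C2 * ((b - a) * b) * A) * y ^ (2 * α - 3) := by
      refine intervalIntegral.integral_mono_on_of_le_Ioo hrp (hIntg _ _)
        ((intervalIntegral.intervalIntegrable_rpow (Or.inr hz)).const_mul _) fun y hy => ?_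
      have hy0 : 0 < y := by linarith [hy.1]
      have h2b : 2 * b ≤ y := by
        rcases min_choice (2 * b) π with h | h
        · rw [← h]; exact hy.1.le
        · exfalso; rw [hr, h] at hy; linarith [hy.1, hy.2]
      have e1 := hK2 a b y ha hab.le h2b hy0 hy.2.le
      have e2 : Dk α a b y = (Kker α (y + b) + Kker α (y - b)) -
          (Kker α (y + a) + Kker α (y - a)) := by
        unfold Dk
        rw [← K_even α (b - y), ← K_even α (a - y), neg_sub, neg_sub, add_comm b, add_comm a]
        ring
      rw [← e2] at e1
      have e3 := hu y ⟨by linarith, hy.2.le⟩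
      have e4 : 0 ≤ φ 0 - φ y := sub_nonneg.mpr (anti ⟨le_rfl, hpi.le⟩ ⟨hy0.le, hy.2.le⟩ hy0.le)
      have e5 : y ^ (2 * α - 3) = y ^ (α - 3) * y ^ α := by
        rw [← Real.rpow_add hy0]; ring_nf
      calc _ ≤ |Dk α a b y| * (φ 0 - φ y) :=
            mul_le_mul_of_nonneg_right (le_abs_self _) e4
        _ ≤ (C2 * ((b - a) * b) * y ^ (α - 3)) * (A * y ^ α) :=
            mul_le_mul e1 e3 e4 ((abs_nonneg _).trans e1)
        _ = _ := by rw [e5]; ring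
    have s2 : ∫ y in r..π, y ^ (2 * α - 3) ≤ b ^ (2 * α - 2) / (2 - 2 * α) := by
      rw [integral_rpow (Or.inr ⟨by linarith, hz⟩), show 2 * α - 3 + 1 = -(2 - 2 * α) by ring,
        div_neg, ← neg_div]
      gcongr
      have e1 : 0 < π ^ (-(2 - 2 * α)) := Real.rpow_pos_of_pos hpi _
      have e2 : r ^ (-(2 - 2 * α)) ≤ b ^ (-(2 - 2 * α)) :=
        Real.rpow_le_rpow_of_nonpos hb0 hbr (by linarith)
      rw [show 2 * α - 2 = -(2 - 2 * α) by ring]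
      linarith
    have s3 : (b - a) * b * b ^ (2 * α - 2) ≤ b ^ α * (b - a) ^ α := by
      have e1 : b * b ^ (2 * α - 2) = b ^ α * b ^ (α - 1) := by
        rw [← Real.rpow_add hb0]
        nth_rewrite 1 [← Real.rpow_one b]
        rw [← Real.rpow_add hb0]; ring_nf
      have e2 : b ^ (α - 1) ≤ (b - a) ^ (α - 1) :=
        Real.rpow_le_rpow_of_nonpos (by linarith) (by linarith) (by linarith [hα.2])
      have e3 : (b - a) ^ α = (b - a) * (b - a) ^ (α - 1) := by
        rw [← Real.rpow_one_add' (by linarith) (by linarith [hα.1])]; ring_nf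
      calc (b - a) * b * b ^ (2 * α - 2) = (b - a) * b ^ α * b ^ (α - 1) := by
            rw [mul_assoc, e1]; ring
        _ ≤ (b - a) * b ^ α * (b - a) ^ (α - 1) :=
            mul_le_mul_of_nonneg_left e2 (mul_nonneg (by linarith) hbα.le)
        _ = _ := by rw [e3]; ring
    rw [intervalIntegral.integral_const_mul] at s1
    have hcoef : 0 ≤ C2 * ((b - a) * b) * A := by
      have : 0 ≤ b - a := by linarith
      positivity
    calc _ ≤ _ := s1
      _ ≤ C2 * ((b - a) * b) * A * (b ^ (2 * α - 2) / (2 - 2 * α)) :=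
          mul_le_mul_of_nonneg_left s2 hcoef
      _ = C2 / (2 - 2 * α) * A * ((b - a) * b * b ^ (2 * α - 2)) := by ring
      _ ≤ C2 / (2 - 2 * α) * A * (b ^ α * (b - a) ^ α) :=
          mul_le_mul_of_nonneg_left s3 (by positivity)
      _ = _ := by ring
  calc _ ≤ _ := add_le_add near far
    _ = _ := by ring

lemma wave_upper {α : ℝ} (hα : α ∈ Ioo (0:ℝ) 1) {G φ : ℝ → ℝ} (W : Wave α G φ) {μ L c1 : ℝ}
    (hμ : φ 0 ≤ μ) (hL : L < φ 0) (hc1 : 0 < c1)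
    (hG : ∀ s t, L ≤ t → t ≤ s → s ≤ μ → c1 * ((s - t) * (μ - t)) ≤ G s - G t) :
    ∃ A > 0, ∀ x, 0 ≤ x → x ≤ π → φ 0 - φ x ≤ A * x ^ α := by
  have hpi := Real.pi_pos
  obtain ⟨C, hC, hK⟩ := wave_key hα
  have hev : ∀ᶠ x in 𝓝 (0:ℝ), L < φ x := W.cont.continuousAt.eventually (lt_mem_nhds hL)
  obtain ⟨η, hη, hball⟩ := Metric.eventually_nhds_iff.mp hev
  set x0 := min (η / 2) π with hx0
  have hx00 : 0 < x0 := by positivity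
  set B := (φ 0 - φ π) / x0 ^ α with hB
  refine ⟨max (C / c1) B, lt_max_of_lt_left (by positivity), ?_⟩
  intro x hx hxp
  rcases hx.eq_or_lt with h | hx
  · rw [← h, Real.zero_rpow hα.1.ne']; simp
  have hcq : ContinuousOn (fun y => (φ 0 - φ y) / y ^ α) (Icc x π) := by
    have := W.cont
    refine ContinuousOn.div (by fun_prop) ?_ ?_
    · intro y hy
      exact (Real.continuousAt_rpow_const y _ (Or.inl (by linarith [hy.1]))).continuousWithinAt
    · intro y hy
      exact (Real.rpow_pos_of_pos (by linarith [hy.1]) _).ne'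
  obtain ⟨y, hy, hmax⟩ := isCompact_Icc.exists_isMaxOn ⟨x, ⟨le_rfl, hxp⟩⟩ hcq
  have hy0 : 0 < y := by linarith [hy.1]
  have hyα : 0 < y ^ α := Real.rpow_pos_of_pos hy0 _
  have hu0 : ∀ z, 0 ≤ z → z ≤ π → 0 ≤ φ 0 - φ z := fun z h1 h2 =>
    sub_nonneg.mpr (W.anti ⟨le_rfl, hpi.le⟩ ⟨h1, h2⟩ h1)
  set A := (φ 0 - φ y) / y ^ α with hAdef
  have hA0 : 0 ≤ A := div_nonneg (hu0 y hy0.le hy.2) hyα.le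
  have hAz : ∀ z ∈ Icc x π, φ 0 - φ z ≤ A * z ^ α := by
    intro z hz
    have : (φ 0 - φ z) / z ^ α ≤ A := hmax hz
    rwa [div_le_iff₀ (Real.rpow_pos_of_pos (by linarith [hz.1]) _)] at this
  have hxα : 0 < x ^ α := Real.rpow_pos_of_pos hx _
  refine (hAz x ⟨le_rfl, hxp⟩).trans ?_
  gcongr
  rcases le_total x0 y with h | h
  · refine le_trans ?_ (le_max_right _ _)
    rw [hAdef, hB]
    apply div_le_div₀ (by linarith [W.lt]) _ (by positivity)
      (Real.rpow_le_rpow hx00.le h hα.1.le)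
    have := W.anti ⟨hy0.le, hy.2⟩ ⟨hpi.le, le_rfl⟩ hy.2
    linarith
  · refine le_trans ?_ (le_max_left _ _)
    have hk := hK φ W.cont W.even W.anti 0 y A le_rfl hy0 hy.2 hA0
      (fun z hz => hAz z ⟨hy.1.trans hz.1, hz.2⟩)
    rw [W.eqn, sub_zero] at hk
    have hLy : L ≤ φ y := by
      refine (hball ?_).le
      rw [Real.dist_eq, sub_zero, abs_of_pos hy0]
      have := min_le_left (η / 2) π
      linarith
    have hg := hG (φ 0) (φ y) hLy (by linarith [hu0 y hy0.le hy.2]) hμ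
    have hAy : φ 0 - φ y = A * y ^ α := by rw [hAdef]; field_simp
    rw [le_div_iff₀ hc1]
    by_contra hcon
    push Not at hcon
    have hApos : 0 < A := by
      rcases hA0.eq_or_lt with h | h
      · rw [← h] at hcon; linarith
      · exact h
    have e1 : c1 * ((φ 0 - φ y) * (φ 0 - φ y)) ≤ c1 * ((φ 0 - φ y) * (μ - φ y)) := by
      have := hu0 y hy0.le hy.2
      gcongr
    rw [hAy] at e1 hg
    have e2 : 0 < A * y ^ α * y ^ α := by positivity
    nlinarith

lemma wave_holder {α : ℝ} (hα : α ∈ Ioo (0:ℝ) 1) {G φ : ℝ → ℝ} (W : Wave α G φ) {μ L c1 c0 : ℝ}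
    (hμ : φ 0 ≤ μ) (hL : L < φ 0) (hc1 : 0 < c1)
    (hG : ∀ s t, L ≤ t → t ≤ s → s ≤ μ → c1 * ((s - t) * (μ - t)) ≤ G s - G t)
    (hc0 : 0 < c0) (hlow : ∀ x, 0 ≤ x → x ≤ π → c0 * x ^ α ≤ μ - φ x) :
    ∃ C > 0, ∀ a b, 0 ≤ a → a ≤ b → b ≤ π → L ≤ φ b → φ a - φ b ≤ C * (b - a) ^ α := by
  have hpi := Real.pi_pos
  obtain ⟨C, hC, hK⟩ := wave_key hα
  obtain ⟨A, hA, hup⟩ := wave_upper hα W hμ hL hc1 hG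
  refine ⟨C * A / (c1 * c0), by positivity, fun a b ha hab hb hLb => ?_⟩
  rcases hab.eq_or_lt with h | hab
  · rw [h, sub_self, sub_self, Real.zero_rpow hα.1.ne', mul_zero]
  have hb0 : 0 < b := by linarith
  have hbα : 0 < b ^ α := Real.rpow_pos_of_pos hb0 _
  have hk := hK φ W.cont W.even W.anti a b A ha hab hb hA.le
    (fun z hz => hup z (by linarith [hz.1]) hz.2)
  rw [W.eqn] at hk
  have hle : φ b ≤ φ a := W.anti ⟨ha, by linarith⟩ ⟨hb0.le, hb⟩ hab.le
  have hle0 : φ a ≤ φ 0 := W.anti ⟨le_rfl, hpi.le⟩ ⟨ha, by linarith⟩ ha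
  have hg := hG (φ a) (φ b) hLb hle (hle0.trans hμ)
  have hl := hlow b hb0.le hb
  have e1 : c1 * ((φ a - φ b) * (c0 * b ^ α)) ≤ c1 * ((φ a - φ b) * (μ - φ b)) := by
    have : 0 ≤ φ a - φ b := by linarith
    gcongr
  rw [div_mul_eq_mul_div, le_div_iff₀ (by positivity)]
  refine le_of_mul_le_mul_right ?_ hbα
  nlinarith

/-- Bernoulli type bounds on `[0,1]`. -/
lemma bern_bounds {q : ℝ} (hq : 0 < q) : ∃ k > 0, ∃ K > 0, ∀ r : ℝ, 0 ≤ r → r ≤ 1 →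
    k * (1 - r) ≤ 1 - r ^ q ∧ 1 - r ^ q ≤ K * (1 - r) := by
  rcases le_total 1 q with h | h
  · refine ⟨1, one_pos, q, hq, fun r h0 h1 => ⟨?_, ?_⟩⟩
    · have := Real.rpow_le_rpow_of_exponent_ge' h0 h1 zero_le_one h
      rw [Real.rpow_one] at this; linarith
    · have := one_add_mul_self_le_rpow_one_add (s := r - 1) (by linarith) h
      rw [show 1 + (r - 1) = r by ring] at this; linarith
  · refine ⟨q, hq, 1, one_pos, fun r h0 h1 => ⟨?_, ?_⟩⟩
    · have := rpow_one_add_le_one_add_mul_self (s := r - 1) (by linarith) hq.le h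
      rw [show 1 + (r - 1) = r by ring] at this; linarith
    · have := Real.rpow_le_rpow_of_exponent_ge' h0 h1 hq.le h
      rw [Real.rpow_one] at this; linarith

/-- Two sided quadratic bounds of `c s - s^p` on `[0, μ]`. -/
lemma core_bounds {p μ c : ℝ} (hp : 1 < p) (hμ : 0 < μ) (hc : c = p * μ ^ (p - 1)) :
    ∃ k > 0, ∃ K > 0, ∀ s t : ℝ, 0 ≤ t → t ≤ s → s ≤ μ →
      k * ((s - t) * (μ - t)) ≤ (c * s - s ^ p) - (c * t - t ^ p) ∧
      (c * s - s ^ p) - (c * t - t ^ p) ≤ K * ((s - t) * (μ - t)) := by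
  obtain ⟨k, hk, K, hK, hb⟩ := bern_bounds (q := p - 1) (by linarith)
  have hM : 0 < μ ^ (p - 1) := Real.rpow_pos_of_pos hμ _
  have hp0 : 0 < p := by linarith
  set m := p * μ ^ (p - 1) / μ with hm
  have hm0 : 0 < m := by positivity
  have hd : ∀ s : ℝ, 0 ≤ s → s ≤ μ →
      m * k * (μ - s) ≤ c - p * s ^ (p - 1) ∧ c - p * s ^ (p - 1) ≤ m * K * (μ - s) := by
    intro s h0 h1
    have h := hb (s / μ) (by positivity) (by rw [div_le_one hμ]; exact h1)
    rw [Real.div_rpow h0 hμ.le] at h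
    have e1 : c - p * s ^ (p - 1) = p * μ ^ (p - 1) * (1 - s ^ (p - 1) / μ ^ (p - 1)) := by
      rw [hc]; field_simp
    have e2 : m * (μ - s) = p * μ ^ (p - 1) * (1 - s / μ) := by
      rw [hm]; field_simp
    have hpM : 0 ≤ p * μ ^ (p - 1) := by positivity
    constructor
    · calc m * k * (μ - s) = k * (m * (μ - s)) := by ring
        _ = p * μ ^ (p - 1) * (k * (1 - s / μ)) := by rw [e2]; ring
        _ ≤ _ := by rw [e1]; exact mul_le_mul_of_nonneg_left h.1 hpM
    · calc c - p * s ^ (p - 1) ≤ p * μ ^ (p - 1) * (K * (1 - s / μ)) := by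
            rw [e1]; exact mul_le_mul_of_nonneg_left h.2 hpM
        _ = K * (m * (μ - s)) := by rw [e2]; ring
        _ = _ := by ring
  have hder : ∀ s : ℝ, HasDerivAt (fun s : ℝ => c * s - s ^ p) (c - p * s ^ (p - 1)) s := by
    intro s
    have h1 := (hasDerivAt_id s).const_mul c
    have h2 := Real.hasDerivAt_rpow_const (x := s) (p := p) (Or.inr hp.le)
    exact (h1.sub h2).congr_deriv (by simp)
  have hder2 : ∀ (a : ℝ) (s : ℝ), HasDerivAt (fun s : ℝ => (c * s - s ^ p) + a * (μ - s) ^ 2)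
      ((c - p * s ^ (p - 1)) - 2 * a * (μ - s)) s := by
    intro a s
    have h3 : HasDerivAt (fun s : ℝ => a * (μ - s) ^ 2) (-(2 * a * (μ - s))) s := by
      have := (((hasDerivAt_id s).const_sub μ).pow 2).const_mul a
      exact this.congr_deriv (by simp; ring)
    exact ((hder s).add h3).congr_deriv (by ring)
  have hcont : ∀ a : ℝ, ContinuousOn (fun s : ℝ => (c * s - s ^ p) + a * (μ - s) ^ 2) (Icc 0 μ) :=
    fun a s _ => (hder2 a s).continuousAt.continuousWithinAt
  have hmon : MonotoneOn (fun s : ℝ => (c * s - s ^ p) + (m * k / 2) * (μ - s) ^ 2) (Icc 0 μ) := by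
    apply monotoneOn_of_deriv_nonneg (convex_Icc _ _) (hcont _)
    · exact fun s _ => (hder2 _ s).differentiableAt.differentiableWithinAt
    · intro s hs
      rw [interior_Icc] at hs
      rw [(hder2 _ s).deriv]
      have := (hd s hs.1.le hs.2.le).1
      linarith
  have hant : AntitoneOn (fun s : ℝ => (c * s - s ^ p) + (m * K / 2) * (μ - s) ^ 2) (Icc 0 μ) := by
    apply antitoneOn_of_deriv_nonpos (convex_Icc _ _) (hcont _)
    · exact fun s _ => (hder2 _ s).differentiableAt.differentiableWithinAt
    · intro s hs
      rw [interior_Icc] at hs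
      rw [(hder2 _ s).deriv]
      have := (hd s hs.1.le hs.2.le).2
      linarith
  refine ⟨m * k / 2, by positivity, m * K, by positivity, fun s t h0 h1 h2 => ⟨?_, ?_⟩⟩
  · have h := hmon ⟨h0, h1.trans h2⟩ ⟨h0.trans h1, h2⟩ h1
    simp only at h
    have hmk : 0 < m * k / 2 := by positivity
    have : 0 ≤ (m * k / 2) * ((s - t) * (μ - s)) :=
      mul_nonneg hmk.le (mul_nonneg (by linarith) (by linarith))
    nlinarith
  · have h := hant ⟨h0, h1.trans h2⟩ ⟨h0.trans h1, h2⟩ h1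
    simp only at h
    have hmk : 0 < m * K / 2 := by positivity
    have : 0 ≤ (m * K / 2) * ((s - t) * (s - t)) :=
      mul_nonneg hmk.le (mul_nonneg (by linarith) (by linarith))
    nlinarith

lemma G_lower_abs {p μ c L : ℝ} (hp : 1 < p) (hμ : 0 < μ) (hc : c = p * μ ^ (p - 1))
    (hL : L < μ) : ∃ c1 > 0, ∀ s t : ℝ, L ≤ t → t ≤ s → s ≤ μ →
      c1 * ((s - t) * (μ - t)) ≤ (c * s - nAbs p s) - (c * t - nAbs p t) := by
  obtain ⟨k, hk, K, hK, hb⟩ := core_bounds hp hμ hc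
  have hc0 : 0 < c := by rw [hc]; positivity
  have hneg : ∀ s t : ℝ, t ≤ s → s ≤ 0 → c * (s - t) ≤ (c * s - nAbs p s) - (c * t - nAbs p t) := by
    intro s t h1 h2
    have : nAbs p s ≤ nAbs p t := by
      unfold nAbs
      apply Real.rpow_le_rpow (abs_nonneg _) _ (by linarith)
      rw [abs_of_nonpos h2, abs_of_nonpos (h1.trans h2)]; linarith
    linarith
  have hpos : ∀ s t : ℝ, 0 ≤ t → t ≤ s → s ≤ μ →
      k * ((s - t) * (μ - t)) ≤ (c * s - nAbs p s) - (c * t - nAbs p t) := by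
    intro s t h0 h1 h2
    have := (hb s t h0 h1 h2).1
    unfold nAbs
    rwa [abs_of_nonneg h0, abs_of_nonneg (h0.trans h1)]
  set d := min (k * μ) c with hd
  have hd0 : 0 < d := lt_min (by positivity) hc0
  have hD : 0 < μ - L := by linarith
  have key : ∀ s t : ℝ, L ≤ t → t ≤ s → d / (μ - L) * ((s - t) * (μ - t)) ≤ d * (s - t) := by
    intro s t h0 h1
    rw [div_mul_eq_mul_div, div_le_iff₀ hD]
    have : (s - t) * (μ - t) ≤ (s - t) * (μ - L) :=
      mul_le_mul_of_nonneg_left (by linarith) (by linarith)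
    nlinarith
  refine ⟨min k (d / (μ - L)), lt_min hk (by positivity), fun s t h0 h1 h2 => ?_⟩
  have hX : 0 ≤ (s - t) * (μ - t) := mul_nonneg (by linarith) (by linarith)
  rcases le_total 0 t with ht | ht
  · exact (mul_le_mul_of_nonneg_right (min_le_left _ _) hX).trans (hpos s t ht h1 h2)
  · refine (mul_le_mul_of_nonneg_right (min_le_right _ _) hX).trans ((key s t h0 h1).trans ?_)
    rcases le_total s 0 with hs | hs
    · exact (mul_le_mul_of_nonneg_right (min_le_right _ _) (by linarith)).trans (hneg s t h1 hs)
    · have a1 := hneg 0 t ht le_rfl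
      have a2 := hpos s 0 le_rfl hs h2
      have a3 : d * (0 - t) ≤ c * (0 - t) := mul_le_mul_of_nonneg_right (min_le_right _ _) (by linarith)
      have a4 : d * s ≤ k * μ * s := mul_le_mul_of_nonneg_right (min_le_left _ _) hs
      nlinarith

lemma nSgn_pos {p s : ℝ} (hp : 1 < p) (hs : 0 ≤ s) : nSgn p s = s ^ p := by
  unfold nSgn
  rw [abs_of_nonneg hs]
  rcases hs.eq_or_lt with h | h
  · rw [← h, Real.zero_rpow (show p ≠ 0 by linarith)]; simp
  · rw [Real.rpow_sub_one h.ne']; field_simp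

lemma nSgn_neg (p s : ℝ) : nSgn p (-s) = - nSgn p s := by
  unfold nSgn; rw [abs_neg]; ring

lemma G_lower_sgn {p μ c : ℝ} (hp : 1 < p) (hμ : 0 < μ) (hc : c = p * μ ^ (p - 1)) :
    ∃ c1 > 0, ∀ s t : ℝ, -(μ / 2) ≤ t → t ≤ s → s ≤ μ →
      c1 * ((s - t) * (μ - t)) ≤ (c * s - nSgn p s) - (c * t - nSgn p t) := by
  obtain ⟨k, hk, K, hK, hb⟩ := core_bounds hp hμ hc
  have hpos : ∀ s t : ℝ, 0 ≤ t → t ≤ s → s ≤ μ →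
      k * ((s - t) * (μ - t)) ≤ (c * s - nSgn p s) - (c * t - nSgn p t) := by
    intro s t h0 h1 h2
    have := (hb s t h0 h1 h2).1
    rwa [nSgn_pos hp h0, nSgn_pos hp (h0.trans h1)]
  have hneg : ∀ s t : ℝ, -(μ / 2) ≤ t → t ≤ s → s ≤ 0 →
      k * (μ / 2) * (s - t) ≤ (c * s - nSgn p s) - (c * t - nSgn p t) := by
    intro s t h0 h1 h2
    have := hpos (-t) (-s) (by linarith) (by linarith) (by linarith)
    rw [nSgn_neg, nSgn_neg] at this
    have h3 : k * (μ / 2) * (s - t) ≤ k * (μ + s) * (s - t) := by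
      apply mul_le_mul_of_nonneg_right _ (by linarith)
      apply mul_le_mul_of_nonneg_left (by linarith) hk.le
    nlinarith
  have key : ∀ s t : ℝ, -(μ / 2) ≤ t → t ≤ s → k / 3 * ((s - t) * (μ - t)) ≤ k * (μ / 2) * (s - t) := by
    intro s t h0 h1
    have : k * (s - t) * (μ - t) ≤ k * (s - t) * (3 * (μ / 2)) :=
      mul_le_mul_of_nonneg_left (by linarith) (mul_nonneg hk.le (by linarith))
    nlinarith
  refine ⟨k / 3, by positivity, fun s t h0 h1 h2 => ?_⟩
  have hX : 0 ≤ (s - t) * (μ - t) := mul_nonneg (by linarith) (by linarith)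
  rcases le_total 0 t with ht | ht
  · exact (mul_le_mul_of_nonneg_right (by linarith) hX).trans (hpos s t ht h1 h2)
  · refine (key s t h0 h1).trans ?_
    rcases le_total s 0 with hs | hs
    · exact hneg s t h0 h1 hs
    · have a1 := hneg 0 t h0 ht le_rfl
      have a2 := hpos s 0 le_rfl hs h2
      have a4 : 0 ≤ k * μ * s := by positivity
      nlinarith

lemma G_upper {p μ c : ℝ} (hp : 1 < p) (hμ : 0 < μ) (hc : c = p * μ ^ (p - 1)) {n : ℝ → ℝ}
    (hn : ∀ s, 0 ≤ s → n s = s ^ p) :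
    ∃ C2 > 0, ∀ s t : ℝ, 0 ≤ t → t ≤ s → s ≤ μ →
      (c * s - n s) - (c * t - n t) ≤ C2 * ((s - t) * (μ - t)) := by
  obtain ⟨k, hk, K, hK, hb⟩ := core_bounds hp hμ hc
  refine ⟨K, hK, fun s t h0 h1 h2 => ?_⟩
  rw [hn s (h0.trans h1), hn t h0]
  exact (hb s t h0 h1 h2).2

lemma wave_low_all {α : ℝ} (hα : α ∈ Ioo (0:ℝ) 1) {G φ : ℝ → ℝ} (W : Wave α G φ) {μ C2 : ℝ}
    (hμ : 0 < μ) (h0 : φ 0 ≤ μ) (hC2 : 0 < C2)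
    (hG : ∀ s t, 0 ≤ t → t ≤ s → s ≤ μ → G s - G t ≤ C2 * ((s - t) * (μ - t))) :
    ∃ c0 > 0, ∀ x, 0 ≤ x → x ≤ π → c0 * x ^ α ≤ μ - φ x := by
  have hpi := Real.pi_pos
  have hpα : 0 < π ^ α := Real.rpow_pos_of_pos hpi _
  rcases h0.eq_or_lt with h | h
  · obtain ⟨δ, hδ, hδ1, c, hc, hl⟩ := wave_lower hα W hμ h hC2 hG
    have hδα : 0 < δ ^ α := Real.rpow_pos_of_pos hδ _
    refine ⟨min c (c * δ ^ α / π ^ α), lt_min hc (by positivity), fun x hx0 hx1 => ?_⟩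
    have hxα : 0 ≤ x ^ α := Real.rpow_nonneg hx0 _
    rcases le_total x δ with hx | hx
    · exact (mul_le_mul_of_nonneg_right (min_le_left _ _) hxα).trans (hl x hx0 hx)
    · refine (mul_le_mul_of_nonneg_right (min_le_right _ _) hxα).trans ?_
      have h1 := hl δ hδ.le le_rfl
      have h2 : φ x ≤ φ δ := W.anti ⟨hδ.le, hx.trans hx1⟩ ⟨hx0, hx1⟩ hx
      have h3 : x ^ α ≤ π ^ α := Real.rpow_le_rpow hx0 hx1 hα.1.le
      have h4 : c * δ ^ α / π ^ α * x ^ α ≤ c * δ ^ α / π ^ α * π ^ α :=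
        mul_le_mul_of_nonneg_left h3 (by positivity)
      rw [div_mul_cancel₀ _ hpα.ne'] at h4
      linarith
  · refine ⟨(μ - φ 0) / π ^ α, div_pos (by linarith) hpα, fun x hx0 hx1 => ?_⟩
    have h2 : φ x ≤ φ 0 := W.anti ⟨le_rfl, hpi.le⟩ ⟨hx0, hx1⟩ hx0
    have h3 : x ^ α ≤ π ^ α := Real.rpow_le_rpow hx0 hx1 hα.1.le
    have h4 : (μ - φ 0) / π ^ α * x ^ α ≤ (μ - φ 0) / π ^ α * π ^ α :=
      mul_le_mul_of_nonneg_left h3 (div_nonneg (by linarith) hpα.le)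
    rw [div_mul_cancel₀ _ hpα.ne'] at h4
    linarith

/-- Reflection of a wave for an odd nonlinearity. -/
lemma wave_reflect {α : ℝ} {G φ : ℝ → ℝ} (W : Wave α G φ) (hodd : ∀ s, G (-s) = - G s) :
    Wave α G (fun x => - φ (π - x)) := by
  have hpi := Real.pi_pos
  have hsym : ∀ x, φ (x - π) = φ (π - x) := fun x => by
    rw [← W.even]; congr 1; ring
  have hT : ∀ x, Tc α (fun x => - φ (π - x)) x = - Tc α φ (x - π) := by
    intro x
    unfold Tc
    have hper : Function.Periodic (fun y => Kker α (x - y) * - φ (π - y)) (2 * π) := by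
      intro y
      simp only
      have e1 : Kker α (x - (y + 2 * π)) = Kker α (x - y) := by
        rw [← sub_sub]; exact (K_periodic α).sub_eq _
      have e2 : φ (π - (y + 2 * π)) = φ (π - y) := by
        rw [← sub_sub]; exact W.per.sub_eq _
      rw [e1, e2]
    rw [← period_shift hper π, ← intervalIntegral.integral_neg]
    apply intervalIntegral.integral_congr
    intro z _
    simp only
    rw [show π - (π + z) = -z by ring, W.even, show x - (π + z) = x - π - z by ring]
    ring
  refine ⟨by have := W.cont; fun_prop, ?_, ?_, ?_, ?_, ?_⟩
  · intro x
    simp only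
    rw [← sub_sub, W.per.sub_eq]
  · intro x
    rw [← hsym x, ← W.per (x - π)]
    congr 2; ring
  · intro x hx y hy hxy
    simp only
    exact neg_le_neg (W.anti ⟨by linarith [hy.2], by linarith [hy.1]⟩
      ⟨by linarith [hx.2], by linarith [hx.1]⟩ (by linarith))
  · intro a b
    rw [hT, hT]
    have := W.eqn (a - π) (b - π)
    simp only [hodd]
    rw [← hsym a, ← hsym b]
    linarith
  · have := W.lt
    simp only [sub_self, sub_zero]
    linarith

lemma wave_holder_sgn {α : ℝ} (hα : α ∈ Ioo (0:ℝ) 1) {G φ : ℝ → ℝ} (W : Wave α G φ)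
    {μ C2 c1 : ℝ} (hodd : ∀ s, G (-s) = - G s) (hμ : 0 < μ) (h0 : φ 0 = μ) (hneg : φ π < 0)
    (hlow : -μ ≤ φ π) (hC2 : 0 < C2)
    (hG2 : ∀ s t, 0 ≤ t → t ≤ s → s ≤ μ → G s - G t ≤ C2 * ((s - t) * (μ - t)))
    (hc1 : 0 < c1)
    (hG1 : ∀ s t, -(μ / 2) ≤ t → t ≤ s → s ≤ μ → c1 * ((s - t) * (μ - t)) ≤ G s - G t) :
    ∃ C > 0, ∀ a b, 0 ≤ a → a ≤ b → b ≤ π → φ a - φ b ≤ C * (b - a) ^ α := by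
  have hpi := Real.pi_pos
  have V := wave_reflect W hodd
  obtain ⟨k0, hk0, hk⟩ := wave_low_all hα W hμ h0.le hC2 hG2
  obtain ⟨l0, hl0, hl⟩ := wave_low_all hα V hμ (by simp only [sub_zero]; linarith) hC2 hG2
  obtain ⟨C, hC, H⟩ := wave_holder hα W h0.le (by rw [h0]; linarith) hc1 hG1 hk0 hk
  obtain ⟨D, hD, J⟩ := wave_holder hα V (by simp only [sub_zero]; linarith)
    (by simp only [sub_zero]; linarith) hc1 hG1 hl0 hl
  have J' : ∀ a b, 0 ≤ a → a ≤ b → b ≤ π → φ a ≤ μ / 2 → φ a - φ b ≤ D * (b - a) ^ α := by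
    intro a b h1 h2 h3 h4
    have := J (π - b) (π - a) (by linarith) (by linarith) (by linarith)
      (by simp only [sub_sub_cancel]; linarith)
    simp only [sub_sub_cancel] at this
    rw [show π - a - (π - b) = b - a by ring] at this
    linarith
  refine ⟨C + D, by positivity, fun a b h1 h2 h3 => ?_⟩
  have hba : 0 ≤ (b - a) ^ α := Real.rpow_nonneg (by linarith) _
  by_cases hb : -(μ / 2) ≤ φ b
  · have := H a b h1 h2 h3 hb
    nlinarith
  by_cases ha : φ a ≤ μ / 2
  · have := J' a b h1 h2 h3 ha
    nlinarith
  push Not at hb ha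
  obtain ⟨e, he, hee⟩ : (0:ℝ) ∈ φ '' Icc a b :=
    intermediate_value_Icc' h2 W.cont.continuousOn ⟨by linarith, by linarith⟩
  have q1 := H a e h1 he.1 (by linarith [he.2]) (by rw [hee]; linarith)
  have q2 := J' e b (by linarith [he.1]) he.2 h3 (by rw [hee]; linarith)
  have r1 : (e - a) ^ α ≤ (b - a) ^ α :=
    Real.rpow_le_rpow (by linarith [he.1]) (by linarith [he.2]) hα.1.le
  have r2 : (b - e) ^ α ≤ (b - a) ^ α :=
    Real.rpow_le_rpow (by linarith [he.2]) (by linarith [he.1]) hα.1.le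
  have s1 := mul_le_mul_of_nonneg_left r1 hC.le
  have s2 := mul_le_mul_of_nonneg_left r2 hD.le
  linarith

/-- From Hölder on the half period to global Hölder. -/
lemma holder_global {α C : ℝ} (hα : 0 < α) (hC : 0 < C) {φ : ℝ → ℝ}
    (per : Function.Periodic φ (2 * π)) (even : ∀ x, φ (-x) = φ x) (anti : AntitoneOn φ (Icc 0 π))
    (H : ∀ a b, 0 ≤ a → a ≤ b → b ≤ π → φ a - φ b ≤ C * (b - a) ^ α) (x y : ℝ) :
    |φ x - φ y| ≤ C * |x - y| ^ α := by
  have hpi := Real.pi_pos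
  have habs : ∀ z, φ |z| = φ z := by
    intro z
    rcases abs_choice z with h | h <;> rw [h]
    exact even z
  have hN : ∀ z : ℝ, φ z = φ ‖(z : AddCircle (2 * π))‖ := by
    intro z
    rw [AddCircle.norm_eq, habs]
    exact (per.sub_int_mul_eq _).symm
  have hle : ∀ z : ℝ, ‖(z : AddCircle (2 * π))‖ ≤ π := by
    intro z
    have := AddCircle.norm_le_half_period (2 * π) (x := (z : AddCircle (2 * π))) (by positivity)
    rw [abs_of_pos (by positivity)] at this
    linarith
  have hd : |‖(x : AddCircle (2 * π))‖ - ‖(y : AddCircle (2 * π))‖| ≤ |x - y| := by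
    refine (abs_norm_sub_norm_le _ _).trans ?_
    rw [← AddCircle.coe_sub]
    have := QuotientAddGroup.norm_mk_le_norm (S := AddSubgroup.zmultiples (2 * π)) (m := x - y)
    exact this
  have key : ∀ a b, 0 ≤ a → a ≤ b → b ≤ π → |φ a - φ b| ≤ C * |a - b| ^ α := by
    intro a b h1 h2 h3
    rw [abs_of_nonneg (sub_nonneg.mpr (anti ⟨h1, h2.trans h3⟩ ⟨h1.trans h2, h3⟩ h2)),
      abs_sub_comm, abs_of_nonneg (by linarith : 0 ≤ b - a)]
    exact H a b h1 h2 h3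
  have key2 : |φ x - φ y| ≤ C * |‖(x : AddCircle (2 * π))‖ - ‖(y : AddCircle (2 * π))‖| ^ α := by
    rw [hN x, hN y]
    rcases le_total ‖(x : AddCircle (2 * π))‖ ‖(y : AddCircle (2 * π))‖ with h | h
    · exact key _ _ (norm_nonneg _) h (hle y)
    · rw [abs_sub_comm, abs_sub_comm ‖(x : AddCircle (2 * π))‖]
      exact key _ _ (norm_nonneg _) h (hle x)
  exact key2.trans (mul_le_mul_of_nonneg_left (Real.rpow_le_rpow (abs_nonneg _) hd hα.le) hC.le)

lemma wave_of_steady {α c : ℝ} {n φ : ℝ → ℝ} (hφ : IsSteadySolution α c n φ)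
    (heven : ∀ x, φ (-x) = φ x) (hmono : MonotoneOn φ (Ioo (-π) 0))
    (hmax' : ∀ x : ℝ, φ x ≤ φ 0) (h0 : 0 < φ 0) :
    Wave α (fun s => c * s - n s) φ ∧ φ π < 0 := by
  have hpi := Real.pi_pos
  obtain ⟨hcont, hper, hIntg, heq⟩ := hφ
  have hin : ∀ x y, 0 < x → x ≤ y → y < π → φ y ≤ φ x := by
    intro x y h1 h2 h3
    rw [← heven x, ← heven y]
    exact hmono ⟨by linarith, by linarith⟩ ⟨by linarith, by linarith⟩ (by linarith)
  have hanti : AntitoneOn φ (Icc 0 π) := by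
    intro x hx y hy hxy
    rcases hx.1.eq_or_lt with h | h
    · rw [← h]; exact hmax' y
    rcases hy.2.eq_or_lt with h' | h'
    · rcases hxy.eq_or_lt with h'' | h''
      · rw [h'']
      have ht : Tendsto φ (𝓝[<] y) (𝓝 (φ y)) := hcont.continuousAt.tendsto.mono_left nhdsWithin_le_nhds
      refine le_of_tendsto ht ?_
      filter_upwards [Ioo_mem_nhdsLT h''] with z hz
      exact hin x z h hz.1.le (by linarith [hz.2])
    · exact hin x y h hxy h'
  have hneg : φ π < 0 := by
    by_contra hcon
    push Not at hcon
    have : 0 < ∫ y in (-π)..π, φ y := by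
      refine intervalIntegral.integral_pos (by linarith) hcont.continuousOn ?_
        ⟨0, ⟨by linarith, hpi.le⟩, h0⟩
      intro x _
      refine hcon.trans (phi_cos hper heven hanti ?_)
      rw [Real.cos_pi]; exact Real.neg_one_le_cos x
    linarith
  refine ⟨⟨hcont, hper, heven, hanti, fun a b => ?_, by linarith⟩, hneg⟩
  unfold Tc
  rw [heq a, heq b]; ring

lemma steady_aux {α p c μ : ℝ} (hα : α ∈ Ioo (0:ℝ) 1) (hp : 1 < p) (hμ : 0 < μ)
    (hc : c = p * μ ^ (p - 1))
    (n n' : ℝ → ℝ)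
    (hn : (n = nAbs p ∧ n' = nAbs' p) ∨ (n = nSgn p ∧ n' = nSgn' p))
    (φ : ℝ → ℝ) (hφ : IsSteadySolution α c n φ) (heven : ∀ x, φ (-x) = φ x)
    (hmono : MonotoneOn φ (Ioo (-π) 0))
    (hle : ∀ x : ℝ, n' (φ x) ≤ c)
    (hmax : φ 0 = μ) (hmax' : ∀ x : ℝ, φ x ≤ φ 0) :
    StrictMonoOn φ (Ioo (-π) 0) ∧
    (∃ C > 0, ∀ x y : ℝ, |φ x - φ y| ≤ C * |x - y| ^ α) ∧
    (∃ δ > 0, ∃ c₁ > 0, ∃ c₂ > 0, ∀ x : ℝ, |x| ≤ δ →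
      c₁ * |x| ^ α ≤ μ - φ x ∧ μ - φ x ≤ c₂ * |x| ^ α) := by
  have hpi := Real.pi_pos
  obtain ⟨W, hneg⟩ := wave_of_steady hφ heven hmono hmax' (by rw [hmax]; exact hμ)
  have hnpos : ∀ s, 0 ≤ s → n s = s ^ p := by
    intro s hs
    rcases hn with h | h
    · rw [h.1]; unfold nAbs; rw [abs_of_nonneg hs]
    · rw [h.1]; exact nSgn_pos hp hs
  obtain ⟨C2, hC2, hG2⟩ := G_upper hp hμ hc hnpos
  obtain ⟨c0, hc0, hlow⟩ := wave_low_all hα W hμ hmax.le hC2 hG2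
  have main : (∃ A > 0, ∀ x, 0 ≤ x → x ≤ π → φ 0 - φ x ≤ A * x ^ α) ∧
      ∃ C > 0, ∀ a b, 0 ≤ a → a ≤ b → b ≤ π → φ a - φ b ≤ C * (b - a) ^ α := by
    rcases hn with h | h
    · obtain ⟨c1, hc1, hG1⟩ := G_lower_abs (L := φ π) hp hμ hc (by linarith)
      rw [← h.1] at hG1
      refine ⟨wave_upper hα W hmax.le W.lt hc1 hG1, ?_⟩
      obtain ⟨C, hC, H⟩ := wave_holder hα W hmax.le W.lt hc1 hG1 hc0 hlow
      exact ⟨C, hC, fun a b h1 h2 h3 => H a b h1 h2 h3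
        (W.anti ⟨h1.trans h2, h3⟩ ⟨hpi.le, le_rfl⟩ h3)⟩
    · obtain ⟨c1, hc1, hG1⟩ := G_lower_sgn hp hμ hc
      rw [← h.1] at hG1
      have hL : -(μ / 2) < φ 0 := by rw [hmax]; linarith
      refine ⟨wave_upper hα W hmax.le hL hc1 hG1, ?_⟩
      have hb : -μ ≤ φ π := by
        have h1 := hle π
        rw [h.2, hc] at h1
        unfold nSgn' at h1
        have h2 : |φ π| ^ (p - 1) ≤ μ ^ (p - 1) := le_of_mul_le_mul_left h1 (by linarith)
        have h3 : |φ π| ≤ μ :=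
          (Real.rpow_le_rpow_iff (abs_nonneg _) hμ.le (by linarith)).mp h2
        exact (abs_le.mp h3).1
      refine wave_holder_sgn hα W ?_ hμ hmax hneg hb hC2 hG2 hc1 hG1
      intro s
      simp only [h.1, nSgn_neg]
      ring
  obtain ⟨⟨A, hA, hup⟩, C, hC, H⟩ := main
  refine ⟨wave_strict hα W, ⟨C, hC, holder_global hα.1 hC W.per W.even W.anti H⟩,
    π, hpi, c0, hc0, A, hA, fun x hx => ?_⟩
  have habs : φ x = φ |x| := by
    rcases abs_choice x with h | h <;> rw [h]
    exact (heven x).symm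
  rw [habs]
  exact ⟨hlow _ (abs_nonneg _) hx, by have := hup _ (abs_nonneg x) hx; rwa [hmax] at this⟩


/-- Regularity of highest waves: an even, nontrivial steady solution
increasing on `(−π,0)` with `n′(φ) ≤ c` and attaining the maximum `φ(0) = μ` is
strictly increasing on `(−π,0)`, globally `α`-Hölder continuous, and exactly
`α`-Hölder continuous at `0`. -/
theorem statement15 (α p c : ℝ) (hα : α ∈ Set.Ioo (0:ℝ) 1) (hp : 1 < p) (hc : 0 < c)
    (n n' : ℝ → ℝ)
    (hn : (n = nAbs p ∧ n' = nAbs' p) ∨ (n = nSgn p ∧ n' = nSgn' p))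
    (φ : ℝ → ℝ) (hφ : IsSteadySolution α c n φ)
    (hnt : ∃ x, φ x ≠ 0) (heven : ∀ x, φ (-x) = φ x)
    (hmono : MonotoneOn φ (Set.Ioo (-π) 0))
    (hle : ∀ x : ℝ, n' (φ x) ≤ c)
    (hmax : φ 0 = (c / p) ^ (1 / (p - 1)))
    (hmax' : ∀ x : ℝ, φ x ≤ φ 0) :
    StrictMonoOn φ (Set.Ioo (-π) 0) ∧
    (∃ C > 0, ∀ x y : ℝ, |φ x - φ y| ≤ C * |x - y| ^ α) ∧
    (∃ δ > 0, ∃ c₁ > 0, ∃ c₂ > 0, ∀ x : ℝ, |x| ≤ δ →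
      c₁ * |x| ^ α ≤ (c / p) ^ (1 / (p - 1)) - φ x ∧
      (c / p) ^ (1 / (p - 1)) - φ x ≤ c₂ * |x| ^ α) := by
  have hp0 : 0 < p := by linarith
  have hcp : 0 < c / p := div_pos hc hp0
  refine steady_aux hα hp (Real.rpow_pos_of_pos hcp _) ?_ n n' hn φ hφ heven hmono hle hmax hmax'
  rw [← Real.rpow_mul hcp.le, one_div_mul_cancel (by linarith), Real.rpow_one]
  field_simp
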